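/- arXiv:2210.06214 — 3 statements merged into one kernel-verified Lean document; each statement's English description precedes it below -/
import Mathlib

section
/- For every nonnegative integer n, there exists an RDSQS(3·7^n + 1), i.e., a Steiner quadruple system SQS(3·7^n + 1) whose derived design at every point is resolvable. -/
open Finset

/-- A parallel class on point set `Y`: a collection of blocks that partitions `Y`. -/
def IsParallelClass (Y : Finset ℕ) (P : Finset (Finset ℕ)) : Prop :=
  (∀ b ∈ P, b ⊆ Y) ∧ ∀ y ∈ Y, ∃! b, b ∈ P ∧ y ∈ b

/-- A block collection `B` on point set `Y` is resolvable if it can be partitioned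
into parallel classes of `Y`. -/
def Resolvable (Y : Finset ℕ) (B : Finset (Finset ℕ)) : Prop :=
  ∃ (r : ℕ) (P : Fin r → Finset (Finset ℕ)),
    (∀ i, IsParallelClass Y (P i)) ∧ (∀ i, P i ⊆ B) ∧ ∀ b ∈ B, ∃! i, b ∈ P i

/-- The blocks of the derived design at a point `x`:
`{B \ {x} : x ∈ B, B ∈ B}`. -/
def derivedBlocks (B : Finset (Finset ℕ)) (x : ℕ) : Finset (Finset ℕ) :=
  (B.filter fun b => x ∈ b).image fun b => b.erase x

/-- A Steiner system S(t, k, v) on point set `X` with block collection `B`. -/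
def IsSteiner (t k v : ℕ) (X : Finset ℕ) (B : Finset (Finset ℕ)) : Prop :=
  X.card = v ∧ (∀ b ∈ B, b ⊆ X ∧ b.card = k) ∧
  ∀ T ⊆ X, T.card = t → ∃! b, b ∈ B ∧ T ⊆ b

/-- An RDS(t, k, v): a Steiner system S(t, k, v) whose derived design at every
point is resolvable. -/
def IsRDS (t k v : ℕ) (X : Finset ℕ) (B : Finset (Finset ℕ)) : Prop :=
  IsSteiner t k v X B ∧ ∀ x ∈ X, Resolvable (X.erase x) (derivedBlocks B x)

/-- Existence of an RDS(t, k, v). -/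
def ExistsRDS (t k v : ℕ) : Prop := ∃ X B, IsRDS t k v X B

/-- Existence of an RDSQS(v), i.e. an RDS(3, 4, v). -/
def ExistsRDSQS (v : ℕ) : Prop := ExistsRDS 3 4 v

/-- A Kirkman triple system KTS(v): a resolvable Steiner triple system. -/
def IsKTS (v : ℕ) (X : Finset ℕ) (B : Finset (Finset ℕ)) : Prop :=
  IsSteiner 2 3 v X B ∧ Resolvable X B

/-- Existence of a large set of Kirkman triple systems LKTS(v): a partition of
all 3-element subsets of a v-element set into v - 2 classes, each a KTS(v). -/
def ExistsLKTS (v : ℕ) : Prop :=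
  ∃ (X : Finset ℕ) (C : Fin (v - 2) → Finset (Finset ℕ)),
    X.card = v ∧ (∀ i, IsKTS v X (C i)) ∧
    (∀ T : Finset ℕ, (T ⊆ X ∧ T.card = 3) ↔ ∃ i, T ∈ C i) ∧
    ∀ (T : Finset ℕ) (i j : Fin (v - 2)), T ∈ C i → T ∈ C j → i = j

/-- A t-wise balanced design S(t, K, v) with block sizes from the set `K`. -/
def IsTBD (t : ℕ) (K : Set ℕ) (v : ℕ) (X : Finset ℕ) (B : Finset (Finset ℕ)) : Prop :=
  X.card = v ∧ (∀ b ∈ B, b ⊆ X ∧ b.card ∈ K) ∧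
  ∀ T ⊆ X, T.card = t → ∃! b, b ∈ B ∧ T ⊆ b

/-- A group divisible design GDD(t, K, g*n) of type g^n: `Gs` is a partition of
`X` into `n` groups of size `g`; blocks have sizes in `K`, meet every group in
at most one point, and every t-subset of `X` meeting every group in at most one
point lies in exactly one block. -/
def IsGDD (t : ℕ) (K : Set ℕ) (g n : ℕ) (X : Finset ℕ)
    (Gs Bs : Finset (Finset ℕ)) : Prop :=
  X.card = g * n ∧ Gs.card = n ∧
  (∀ G ∈ Gs, G ⊆ X ∧ G.card = g) ∧
  (∀ x ∈ X, ∃! G, G ∈ Gs ∧ x ∈ G) ∧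
  (∀ b ∈ Bs, b ⊆ X ∧ b.card ∈ K) ∧
  (∀ b ∈ Bs, ∀ G ∈ Gs, (b ∩ G).card ≤ 1) ∧
  ∀ T ⊆ X, T.card = t → (∀ G ∈ Gs, (T ∩ G).card ≤ 1) → ∃! b, b ∈ Bs ∧ T ⊆ b

/-- An RDGDD(t, K, g*n) of type g^n: a GDD whose derived design at every point
(on point set `X \ G`, where `G` is the group of the point) is resolvable. -/
def IsRDGDD (t : ℕ) (K : Set ℕ) (g n : ℕ) (X : Finset ℕ)
    (Gs Bs : Finset (Finset ℕ)) : Prop :=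
  IsGDD t K g n X Gs Bs ∧
  ∀ x ∈ X, ∀ G ∈ Gs, x ∈ G → Resolvable (X \ G) (derivedBlocks Bs x)

/-- An RDSQS*(v): an SQS(v) with v ≡ 1 (mod 3) such that, for every point `x`,
the derived blocks at `x` contain a parallel class `P'` (enumerated by `Bk`);
the multiset consisting of each triple of `P'` three times and each remaining
derived triple twice can be partitioned into (v-1) parallel classes
`P k l` (k ranging over Fin ((v-1)/3), l over Fin 3); and for each `k` the three
parallel classes `P k l` share the common triple `Bk k`. -/
def IsRDSQSstar (v : ℕ) (X : Finset ℕ) (B : Finset (Finset ℕ)) : Prop :=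
  IsSteiner 3 4 v X B ∧ v % 3 = 1 ∧
  ∀ x ∈ X, ∃ (P' : Finset (Finset ℕ)) (Bk : Fin ((v - 1) / 3) → Finset ℕ)
    (P : Fin ((v - 1) / 3) → Fin 3 → Finset (Finset ℕ)),
    P' ⊆ derivedBlocks B x ∧
    IsParallelClass (X.erase x) P' ∧
    (∀ k, Bk k ∈ P') ∧
    (∀ b ∈ P', ∃ k, Bk k = b) ∧
    Function.Injective Bk ∧
    (∀ k l, IsParallelClass (X.erase x) (P k l)) ∧
    ((∑ k, ∑ l, (P k l).val) =
        3 • P'.val + 2 • ((derivedBlocks B x) \ P').val) ∧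
    ∀ k l, Bk k ∈ P k l

def L22 : List ℕ := [
  302231454903657293678738, 805347494, 17170545, 166020696663390158933, 648518376406122532,
  845043405422616, 9223383031971053674, 31665934879948867, 58030210228933276502851639,
  2436741105160736930267273, 561668, 17181967107, 7253554917687775098571274, 346013303809,
  73667279062792, 5766014897917789703, 77371252464343466435938565, 73859033888876135689,
  33351713285266869321990, 1208925819614629175779335, 226673591177743037374467,
  885443715581008183306, 106034152624133, 360290169212923905, 6755399441068041,
  116056883294690419199184904, 14222439680830064312322, 19342813113834066798903302,
  2814751915245571, 27021602059780104, 2361183241847139532809, 36893494744489000967,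
  504420750451867650, 6044639474366687335415813, 783912836156361105670154, 4398135640073,
  75557863725915675033604, 6917529165087375362, 1864771729096714, 2656367175411200688129,
  47223881001478576406536, 184467440738873901064, 23611832414374113312773,
  96714065569170402830188548, 2305966154549559302, 2066035899205523865602, 162129586736332807,
  8070450541911605257, 590295818055555481605, 4722366570831112306695, 4835703318990915224207362,
  604462909807602350161927, 38685626227678050670084098, 9671406556969848610488321,
  18449277382859685894, 42501298347476074364931, 147618988792108548106,
  12089258772607731245252614, 3626777460823008454115332, 528905068604895958925318,
  1567973404594986287108, 174463107343171357146873865, 680021062045080039194629,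
  154780283843661391430942721, 9448205241051993079812, 2963440612403824295939,
  453477462485506514223105, 143862283214605314047344643, 11032628695604208630497288,
  4835703278458516698859808, 12885559904, 274728720, 2656331146614242542928,
  10376294022497960512, 13520694486761856, 147574128511536858784, 506654958079181872,
  174113652223403819028972400, 8986688, 274911473712, 5536212860944, 1178676465004672,
  92256238366684635248, 96714065713285522052386896, 1181744542222018171024,
  533627412564269909151840, 3626777458843888597991472, 14167099449296130932896, 1696546441986128,
  5764642707406782480, 108086391057088656, 154742578697648829200662656, 227559034893281028997152,
  38685626227668133648269408, 45036030643929136, 432345632956481664, 37778931869554232524944,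
  590295915911824015472, 8070732007229882400, 12542605378501777690722464, 70370170241168,
  1208925819614650800537664, 110680466641398005792, 29836347665547424, 42501874806579211010064,
  755582096023657222504576, 2951479051821982417024, 377789318629985813004368,
  77371252455337368840306752, 36895458472792948832, 33056574387288381849632, 2594073387781324912,
  129127208670585684112, 9444733088888887705680, 75557865133297796907120,
  9671406556921637602590832, 135399691796997140838875168, 295188438125754974304,
  680020773559617189838896, 2361903820673736769696, 8462481097678335342805088,
  25087574473519780593728, 25387442212470162622251152, 10880336992721280627114064,
  116661341610826113868627984, 151171283856831889276992, 47415049798461188735024,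
  7255639399768104227569680, 206168958464, 4395659520, 42501298345827880686848,
  166020704359967368192, 216331111788189696, 2361186056184589740544, 8106479329266909952,
  155195852093028020302919424, 143787008, 4398583579392, 88579405775104, 18858823440074752,
  1476099813866954163968, 96714067875013343190779136, 18907912675552290736384,
  8538038601028318546429440, 226673591188738094926336, 27144743071778048, 92234283318508519680,
  1729382256913418496, 116058059274625118184146944, 3640944558292496463954432,
  58028439341502201308644864, 720576490302866176, 6917530127303706624, 604462909912867720399104,
  9444734654589184247552, 129131712115678118400, 1125922723858688, 1770887466262368092672,
  477381562648758784, 680029996905267376161024, 12089313536378515560073216,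
  47223664829151718672384, 6044629098079773008069888, 19342813113851693341082624,
  590327335564687181312, 528905190196614109594112, 41505174204501198592, 2066035338729370945792,
  151115729422222203290880, 1208925842132764750513920, 135399691799377239915627008,
  4723015010012079588864, 10880332376953875037422336, 37790461130779788315136,
  401401191576316489499648, 48357033072815543139959040, 2418740541709310228431872,
  758640796775379019760384, 3298703335424, 70330552320, 680020773533246090989568,
  2656331269759477891072, 3461297788611035136, 37778976898953435848704, 129703669268270559232,
  84624807373024042229657600, 2300592128, 70377337270272, 1417270492401664, 301741175041196032,
  23617597021871266623488, 174085354917994748586250240, 302526602808836651782144,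
  3626777459019809518821376, 434315889148448768, 1475748533096136314880, 27670116110614695936,
  19361702579765545392963584, 135399691796838482331066368, 11529223844845858816,
  110680482036859305984, 9671406558605883526385664, 151115754473426947960832,
  2066107393850849894400, 18014763581739008, 28334199460197889482752, 7638105002380140544,
  10880479950484278018576384, 755578637266427498758144, 38685626227950158323138560,
  9445237369034994900992, 8462483043145825753505792, 664082787272019177472,
  33056565419669935132672, 2417851670755555252654080, 58028439382122557962461184,
  75568240160193273421824, 604647378092476613042176, 6422419065221063831994368,
  12138252748406064316166144, 52779253366784, 1125288837120, 10880332376531937455833088,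
  42501300316151646257152, 55380764617776562176, 604463630383254973579264,
  2075258708292328947712, 36809474048, 1126037396324352, 22676327878426624, 4827858800659136512,
  377881552349940265975808, 135400282092648826424066048, 4840425644941386428514304,
  6949054226375180288, 23611976529538181038080, 442721857769835134976,
  38987857682571791153233920, 116056878683004636995387392, 184467581517533741056,
  1770887712589748895744, 2417852071574831167373312, 33057718301613598310400, 288236217307824128,
  453347191363166231724032, 122209680038082248704, 12089258196262839980130304,
  174085318029018996878344192, 151123797904559918415872, 10625324596352306839552,
  528905046714718962122752, 58028439991427921610932224, 1209091842563092374749184,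
  9674358049479625808674816, 844468053868544, 18004621393920, 680020805058426340114432,
  886092233884424994816, 9671418086132079577268224, 33204139332677263163392, 588951584768,
  18016598341189632, 362821246054825984, 77245740810546184192, 6046104837599044255612928,
  96723510302136075688083456, 111184867622002884608, 377791624472610896609280,
  7083549724317362159616, 159578208189131055364571136, 58028439341505979963408384,
  2951481304280539856896, 28334203401435982331904, 528923492825817572966400, 4611779476925186048,
  7253555061810659707584512, 1955354880609315979264, 77371252527534598711672832,
  2417980766472958694653952, 170005193541636909432832, 8462480747435503393964032,
  135399702195650007167664128, 13511488861896704, 288073942302720, 10880332880934821441830912,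
  14177475742150799917056, 531266229322836210614272, 9423225356288, 288265573459034112,
  5805139936877215744, 1235931852968738947072, 77522368182788134566625280,
  1778957881952046153728, 6044665991561774345748480, 113336795589077794553856,
  154742504910733007602581504, 47223700868488637710336, 453347254422975717310464,
  8462775885213081167462400, 73788471630802976768, 31285678089749055668224,
  174085319179679905645330432, 2720083096666190550925312, 116057045063989034380951552,
  216183821790347264, 4609183076843520, 226839611874412798672896, 8500259669165379369828352,
  150771605700608, 4612249175344545792, 92882238990035451904, 19774909647499823153152,
  176503169663736479324569600, 28463326111232738459648, 1813388729425244712861696,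
  116056878683971972614848512, 755579213895818203365376, 7253556070767611476967424,
  1180615546092847628288, 500570849435984890691584, 19342831596606938597556224,
  154745167006426672108929024, 3458941148645556224, 73746929229496320, 3629433789990604778766336,
  2412345691209728, 73795986805512732672, 1486115823840567230464, 316398554359997170450432,
  455413217779723815354368, 96714065584651483465383936, 12089267422333091253846016,
  18889848737485562052608, 8009133590975758251065344, 174085613748872549993807872,
  58071032873568404330512384, 55343058378328899584, 1179950867671941120, 38597531059355648,
  1180735788888203722752, 23777853181449075687424, 5062376869759954727206912,
  7286611484475581045669888, 154742505158370926184628224, 302237579799768992841728,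
  77375984045191448559091712, 20024309626893329909153792, 885488934053262393344,
  18879213882751057920, 617560496949690368, 18891772622211259564032, 380445650903185210998784,
  19342817077008335951101952, 4835801276796303885467648, 96789771006853236022837248,
  126960822891952610593472512, 14167822944852198293504, 302067422124016926720,
  9880967951195045888, 302268361955380153024512, 6087130414450963375980544,
  38685689638456440083447808, 97925352572096766717984768, 226685167117635172696064,
  4833078753984270827520, 158095487219120734208, 4836293791286082448392192,
  77372267027949171066798080, 3626962673882162763137024, 77329260063748333240320,
  2529527795505931747328, 38701859389474595760242688, 1237268161019973331845120,
  40472444728094907957248, 135659422385741862281412608, 647559115649518527315968,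
  62184128763956515815030784, 10360945850392296437055488]

def L24 : List ℕ := [
  8462480737302404222943605, 135399691796838467567095895, 14167099448608935968801,
  226673591177742975500306, 855638067, 289171558105160, 4626744929681540, 11024811887802974310,
  31567471001777197009927667865, 2166395068749415481073497345, 412317255687, 1616905734,
  105553216931592, 2656331709564128856322, 4629700416936870659, 680020917648416986628617,
  14913308910766065499175388164, 1074020356, 206167887875, 3298685890565,
  4951760157143491424433508358, 1770900941874999074824, 28334415069999985098754,
  1208933890065161422659593, 928455029464035206176505861, 27021597898899462,
  1475739532493834420233, 3458817290378805250, 96714066001515898204651528,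
  9903671430010494027840028675, 844425017163785, 9223380832955138055, 1180591691086159675393,
  4835703566688892851585028, 34662354156556027784700362760, 39614081257132169140436467714,
  2366947848957890396164, 340010386766614472163335, 87042659012253300696285185,
  504403639570268161, 19342813113839566769356802, 2392538644217861, 4722389000868318937097,
  309485304969250249956655111, 6422418416702719638110216, 3626777458846636303187974,
  38685626227826600703950857, 18889467057447207174148, 453347218384901434769413,
  1547425051412568627715506184, 360324254073356291, 24758800785716622592841875457,
  1238015597149110587269054468, 2475922579869194337535393798, 44573094969191395263602753543,
  104990166313074695, 528911966143702695411713, 773712524555051521672216579,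
  2787782940071867273518776322, 19807041219438355509395062789, 174094763910393845054963717,
  10904829652661548856901635, 116663407628147970828926982, 34662321099990647697175500560,
  12885493040, 71304256, 52778974053200, 110681308867187442304, 309485009852870266116376928,
  19342813618237225060796048, 453350641119999761057824, 101081184, 25776128112, 6598680408192,
  289356276058566704, 166029703862640742432, 42503604188836020625552,
  932081806922879093698478144, 14855280471424563298790670416, 13510800224485520,
  73786980692884979728, 576601489792237680, 77371257067022285608648768,
  2166923973795496881337925760, 1688852015087712, 216176080650764320, 92233825921672413328,
  6044636015602173524050048, 618979464375655876743135280, 8070450562329477136, 36037593195872336,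
  1208925819702590255923232, 75557865133289240526992, 4951760175588265173423489136,
  96737677401584682336780416, 2475880078570760572346826784, 147934240560402923584,
  623352375738793436643440, 159578208189131052940263440, 2417851639239162543997072,
  58028439341537419117723744, 28334201149056339673168, 302231472918060098125888,
  24758800785851720703238209664, 5764627314243534896, 39614761277905707523240886368,
  2901421967075111118806450288, 1547425049107446623251726352, 19807045350932637636775379008,
  1177409827580674160, 44604527040503891304749465632, 33057038258048390397968,
  9913191720866980830354866224, 11031448176041085257121872, 1237940085402240459173003344,
  7291462976759248176808032, 174463162683368393903439920, 3355392, 55340232221212549376,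
  885443715539400659456, 72057624102717440, 1152921985643217920, 43065671436756480,
  123310433600692175820069120, 6917529027759048192, 216172782919420160,
  154742504910760495292875264, 604462932325312724337664, 1328165573307087783680,
  22282920707136844948184695040, 4951760157141521121080771072, 576461302064481536,
  2093470140334336, 24211351596745885952, 1547426524846251240396425216,
  1284483683340543505467136, 3626777458843888077767936, 377789318629597521119488,
  13511005074096640, 24758800785709294347993745408, 38686216523478492346581760,
  36028833257752320, 302231454903933245325568, 1237940039286506175074403328,
  135399820924046985681438720, 1407516617474816, 928455029464175952252634624,
  96714067875013381844893952, 4835998426363713231520768, 9903520314283078002040375552,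
  9671572577614040380999168, 2030995376952577082225854208, 6044629107150713872451584,
  74075224263175963648, 1780110961442646131968, 8431019977414280960, 77522368185039895641720064,
  2066710876199575355648, 44565841451171681643414947072, 39616499109203743619348955904,
  629850362395515341483540992, 2785591854217003730041045760, 29711092209078449432665523712,
  9223372071214862336, 309485009821345412322762752, 31532893973057536, 295508193149542633472,
  24758800877941325866530799616, 19347535480316936440999936, 3458764513876152320,
  432345566115028992, 9671406556922530959990784, 37778933270332047376384, 2434970217729661890560,
  40852021296417549071678443520, 58028439341502200687906816, 18889465931495827836928,
  2252349686968320, 19807040628584098796912263168, 8464546772638659826974720, 844438351912960,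
  23611832414762690449408, 1547425049133746943804080128, 2417888532717406573834240,
  22518075446276096, 618970019642692375127560192, 154745161241819170012684288,
  29721441275225658264446332928, 14855280471424572232321490944, 6044629242188952424681472,
  77371270902080615768670208, 96714065569737681976459264, 111256935090165403648,
  1185203307835350335488, 139505190907288752128, 2785365678688197452205412352,
  6273514280927129600, 4845148047453053008236544, 10077605632956067146692042752,
  2514565711715957711029940224, 1856943263067403089541619712, 44565857057112664402068254720,
  129127208515991306240, 2066035336255743918080, 504403162565181440, 8070450600976056320,
  168225285734400, 481681381252703821824000, 33056565380089479495680,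
  174085318024506609898749952, 70643672612864, 44565841414273692095425871872,
  227559034893281096105984, 75557863725946804502528, 116056878683004607467618304,
  1856910058928073713031184384, 18446867220623065088, 1602023260160,
  34662321099990753288946515968, 1237940039289883891706626048, 11805916207199883034624,
  29710560942889659543981457408, 377789967148055397466112, 42538191834592701448192,
  2377906100809957376, 38987857682580586977624064, 23611850463931108163584,
  618972675973854343811366912, 55520376206223867904, 600681111099422605312,
  4951779046895682954329325568, 680132606919175775387648, 2785402873088576098719367168,
  1605453654468924207395962880, 39749482719816438340456415232, 528905046081401724600320,
  7253554917687787975081984, 4722366483350838837248, 295147912876044320768,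
  29710560942849179374273429504, 4416034832384, 10880332376531802429325312,
  2785365088392140803441426432, 14222439680831142232064, 17965855539200,
  1856910058930603721504063488, 23622208707898278674432, 680611069343626273226752,
  2166395068749422696619573248, 19807040628566366148244799488, 151263301404830643257344,
  377789319757670555582464, 9903520480303739962095828992, 1297124653616070656,
  2436741105301474423865344, 37542569443723313152, 887751810347092148224,
  44272257834496969146368, 44566445877543785181151756288, 309787245887934744450039808,
  2484342669988527396284792832, 24762430219497595999685181440, 658841272320, 1971425556561920,
  31542791792230400, 1881567895520941178880, 128647272857600, 9288695756619776,
  9903521494874662951047921664, 135399691796848775505379328, 96845406524548317184,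
  3097872412762556063547392, 4835704431384419419291648, 604499803302059126554624,
  1475742094355943391232, 116056889059438679805657088, 9610753820732384346112,
  14176323383595844501504, 19342886901936261607456768, 151118073827234657861632,
  10880479973002250486284288, 30990534547431791525888, 14861367601820982271520276480,
  34817516952083675717579046912, 8462480737460759935582208, 1476027756283653259264,
  38728127526013966034665472, 95728110141440, 5066893983481856, 618970093429666983385759744,
  92274254964485783552, 7253555566214918824787968, 153772058608338963791872,
  77371252527464231037042688, 38369227778869788934144, 9444879614204572598272,
  453513203333626182238208, 174087679209155412474462208, 226674176645696139034624,
  1210106429249746169233408, 2176094809505229733953011712, 1025849115806738769866915840,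
  3674937514977656832, 1241982384995025928847360, 19871718159916033994915840,
  47351206502665795952978165760, 1770889128752135012352, 6944557248244875264,
  453347614708781109215232, 19884411881021423976986968064, 4612882304258277376,
  885484335908519936000, 14167748019753309962240, 116056879261435503681994752,
  14855507145016304000303104000, 3626777832642695250575360, 39614119036095556981390049280,
  2166397135937673245445062656, 10275875231331892494073856, 1547580887200660054800859136,
  450929330716256712230174720, 55342771199635619840, 306249447585611776,
  226683967474926564147200, 434140379520958464, 110707627258546225152, 28341116549940570488832,
  1242775742563891774314512384, 58028445106954766825553920, 2476484541482538670258913280,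
  7253564172585421611466752, 928469196572491151803678720, 34662321229189913875899744256,
  154780284202823805311123456, 24758885788304297357754761216, 5056936703447994318832271360,
  14411298905260032, 309485138948632749528842240, 4951762223177002490601144320,
  184965650401150413916078080, 29710560943355788152727928832, 928455032924216990483087360,
  2475882439776525480315846656, 8991385787888503625875456, 58029324929335125543485440,
  154742660555083352868126720, 6045237840630876823617536, 36210955074916995366555484160,
  39614081404707616722262163456, 135432748362517622246342656, 14855280471663412408714526720,
  1856910067034655294731845632, 9673768244684771788062720, 3626835104954302238556160,
  96714397610616437306556416, 26944538667570978191153561600, 2166395087216425753106186240,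
  34662321395175707573454110720, 722522100589503342182400, 303412263541581748895744,
  6880637509818499727360, 10213028935937646041073975296, 18966725183086121713664,
  77162761985524446003200, 5571107966116351607545266176, 2829701717869430046720,
  8467208291932044598968320, 135475259172166794896998400, 552535829642980465049600,
  39894644497175913426845696, 411149102365370734346240, 21762143951353735729381376,
  15783736441672546264150966272, 29826646266411492658479366144, 19812178637086422867216695296,
  1315331361798268738072477696, 1864618731915544749454393344, 61896057490972439815913472]

def nib (m x : ℕ) : ℕ := (m >>> (4 * x)) % 16

def has (x m : ℕ) : Bool := !(Nat.beq (nib m x) 0)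

def colIs (x j m : ℕ) : Bool := Nat.beq (nib m x) (j + 1)

def cntIs (l : List ℕ) (b : Bool) : Bool :=
  match l with
  | [] => b
  | [_] => !b
  | _ => false

/-- `x`, `y` lie in a common group block (22 points). -/
def g2 (x y : ℕ) : Bool := Nat.beq x 21 || Nat.beq y 21 || Nat.beq (x % 7) (y % 7)

def g3 (x y z : ℕ) : Bool := g2 x y && g2 y z && g2 x z

def chk22 : Bool :=
  (List.range 22).all fun x =>
    (fun Lx : List ℕ => (List.range 22).all fun y => Nat.beq x y ||
      (fun Lxy : List ℕ =>
        ((List.range 9).all fun j => cntIs (Lxy.filter (colIs x j)) false) &&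
        cntIs (Lxy.filter (colIs x 9)) (g2 x y) &&
        ((List.range 22).all fun z => Nat.beq x z || Nat.beq y z ||
          cntIs (Lxy.filter (has z)) (g3 x y z))) (Lx.filter (has y)))
      (L22.filter (has x))

/-- `x`, `y` lie in a common group (24 points). -/
def h2 (x y : ℕ) : Bool := Nat.beq (x % 8) (y % 8)

def chk24 : Bool :=
  (List.range 24).all fun x =>
    (fun Lx : List ℕ => (List.range 24).all fun y => Nat.beq x y ||
      (fun Lxy : List ℕ =>
        ((List.range 9).all fun j => cntIs (Lxy.filter (colIs x j)) (h2 x y)) &&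
        cntIs (Lxy.filter (colIs x 9)) true &&
        ((List.range 24).all fun z => Nat.beq x z || Nat.beq y z ||
          cntIs (Lxy.filter (has z)) (h2 x y || h2 y z || h2 x z))) (Lx.filter (has y)))
      (L24.filter (has x))

theorem chk22_true : chk22 = true := by decide +kernel

theorem chk24_true : chk24 = true := by decide +kernel

def code22 : Option (Fin 7 × Fin 3) → ℕ
  | none => 21
  | some p => p.1.val + 7 * p.2.val

def code24 (p : Fin 8 × Fin 3) : ℕ := p.1.val + 8 * p.2.val

def pts22 (m : ℕ) : Finset (Option (Fin 7 × Fin 3)) :=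
  Finset.univ.filter fun p => has (code22 p) m = true

def pts24 (m : ℕ) : Finset (Fin 8 × Fin 3) :=
  Finset.univ.filter fun p => has (code24 p) m = true

theorem card_pts22 : ∀ m ∈ L22, (pts22 m).card = 4 := by decide +kernel

theorem card_pts24 : ∀ m ∈ L24, (pts24 m).card = 4 := by decide +kernel

theorem nib_le22 : ∀ m ∈ L22, ∀ x < 22, nib m x ≤ 10 := by decide +kernel

theorem nib_le24 : ∀ m ∈ L24, ∀ x < 24, nib m x ≤ 10 := by decide +kernel

theorem cntIs_false {l : List ℕ} {p : ℕ → Bool} (h : cntIs (l.filter p) false = true) :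
    ∃! m, m ∈ l ∧ p m = true := by
  unfold cntIs at h
  split at h
  · simp at h
  · rename_i a ha
    have key : ∀ m, (m ∈ l ∧ p m = true) ↔ m = a := by
      intro m
      rw [← List.mem_filter, ha, List.mem_singleton]
    exact ⟨a, (key a).2 rfl, fun m hm => (key m).1 hm⟩
  · simp at h

theorem cntIs_true {l : List ℕ} {p : ℕ → Bool} (h : cntIs (l.filter p) true = true) :
    ∀ m ∈ l, p m = false := by
  unfold cntIs at h
  split at h
  · rename_i ha
    rw [List.filter_eq_nil_iff] at ha
    intro m hm
    simpa using ha m hm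
  · simp at h
  · simp at h

theorem ff2 {l : List ℕ} {p q r : ℕ → Bool} :
    ((l.filter p).filter q).filter r = l.filter (fun m => p m && (q m && r m)) := by
  simp only [List.filter_filter]
  congr 1
  funext m
  cases p m <;> cases q m <;> cases r m <;> rfl

theorem spec22 (x y : ℕ) (hx : x < 22) (hy : y < 22) (hxy : x ≠ y) :
    (∀ j < 9, ∃! m, m ∈ L22 ∧ has x m = true ∧ has y m = true ∧ nib m x = j + 1) ∧
    (g2 x y = false → ∃! m, m ∈ L22 ∧ has x m = true ∧ has y m = true ∧ nib m x = 10) ∧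
    (g2 x y = true → ∀ m ∈ L22, has x m = true → has y m = true → nib m x ≠ 10) ∧
    (∀ z < 22, x ≠ z → y ≠ z →
      (g3 x y z = false → ∃! m, m ∈ L22 ∧ has x m = true ∧ has y m = true ∧ has z m = true) ∧
      (g3 x y z = true → ∀ m ∈ L22, has x m = true → has y m = true → has z m = false)) := by
  have h := chk22_true
  simp only [chk22, ff2, List.all_eq_true, List.mem_range, Bool.or_eq_true, Bool.and_eq_true] at h
  obtain h | ⟨⟨h1, h2⟩, h3⟩ := h x hx y hy
  · exact absurd (Nat.eq_of_beq_eq_true h) hxy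
  refine ⟨fun j hj => ?_, fun hg => ?_, fun hg m hm hmx hmy => ?_, fun z hz hxz hyz => ⟨fun hg => ?_, fun hg m hm hmx hmy => ?_⟩⟩
  · simpa [colIs] using cntIs_false (h1 j hj)
  · rw [hg] at h2
    simpa [colIs] using cntIs_false h2
  · rw [hg] at h2
    intro hh
    have := cntIs_true h2 m hm
    simp [colIs, hmx, hmy, hh] at this
  · have := h3 z hz
    rw [hg] at this
    simpa using cntIs_false ((this.resolve_left (by simp [hxz, hyz])))
  · have := h3 z hz
    rw [hg] at this
    simpa [hmx, hmy] using cntIs_true ((this.resolve_left (by simp [hxz, hyz]))) m hm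

theorem spec24 (x y : ℕ) (hx : x < 24) (hy : y < 24) (hxy : x ≠ y) :
    (∀ j < 9, h2 x y = false →
      ∃! m, m ∈ L24 ∧ has x m = true ∧ has y m = true ∧ nib m x = j + 1) ∧
    (∀ m ∈ L24, has x m = true → has y m = true → nib m x ≠ 10) ∧
    (∀ z < 24, x ≠ z → y ≠ z →
      ((h2 x y || h2 y z || h2 x z) = false →
        ∃! m, m ∈ L24 ∧ has x m = true ∧ has y m = true ∧ has z m = true) ∧
      ((h2 x y || h2 y z || h2 x z) = true →
        ∀ m ∈ L24, has x m = true → has y m = true → has z m = false)) := by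
  have h := chk24_true
  simp only [chk24, ff2, List.all_eq_true, List.mem_range, Bool.or_eq_true, Bool.and_eq_true] at h
  obtain h | ⟨⟨h1, h2⟩, h3⟩ := h x hx y hy
  · exact absurd (Nat.eq_of_beq_eq_true h) hxy
  refine ⟨fun j hj hg => ?_, fun m hm hmx hmy => ?_, fun z hz hxz hyz => ⟨fun hg => ?_, fun hg m hm hmx hmy => ?_⟩⟩
  · have := h1 j hj
    rw [hg] at this
    simpa [colIs] using cntIs_false this
  · intro hh
    have := cntIs_true h2 m hm
    simp [colIs, hmx, hmy, hh] at this
  · have := h3 z hz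
    rw [hg] at this
    simpa using cntIs_false ((this.resolve_left (by simp [hxz, hyz])))
  · have := h3 z hz
    rw [hg] at this
    simpa [hmx, hmy] using cntIs_true ((this.resolve_left (by simp [hxz, hyz]))) m hm

theorem has_iff (x m : ℕ) : has x m = true ↔ nib m x ≠ 0 := by
  unfold has
  rw [Bool.not_eq_true', ← Bool.not_eq_true, Nat.beq_eq]

section Ing

variable {F : Type}

/-- Projection of the weighted point set. -/
def pr (x : Option (F × Fin 3)) : Option F := x.map Prod.fst

/-- Two points lie in a common group block. -/
def SG (x y : Option (F × Fin 3)) : Prop := x = none ∨ y = none ∨ pr x = pr y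

structure Ing (A : Finset (Option F)) (M : Finset ℕ) (pts : ℕ → Finset (Option (F × Fin 3)))
    (c : Option (F × Fin 3) → ℕ → ℕ) : Prop where
  card4 : ∀ m ∈ M, (pts m).card = 4
  sub : ∀ m ∈ M, ∀ x ∈ pts m, pr x ∈ A
  inf : ∀ m ∈ M, ∀ x ∈ pts m, ∀ y ∈ pts m, x ≠ y → pr x = pr y → none ∈ A
  tri : ∀ x y z, x ≠ y → y ≠ z → x ≠ z → pr x ∈ A → pr y ∈ A → pr z ∈ A →
    ¬ (SG x y ∧ SG y z ∧ SG x z) → (none ∈ A ∨ (pr x ≠ pr y ∧ pr y ≠ pr z ∧ pr x ≠ pr z)) →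
    ∃! m, m ∈ M ∧ x ∈ pts m ∧ y ∈ pts m ∧ z ∈ pts m
  tri0 : ∀ m ∈ M, ∀ x ∈ pts m, ∀ y ∈ pts m, ∀ z ∈ pts m, x ≠ y → y ≠ z → x ≠ z →
    ¬ (SG x y ∧ SG y z ∧ SG x z)
  col : ∀ x y, x ≠ y → pr x ∈ A → pr y ∈ A → (pr x ≠ pr y ∨ none ∈ A) → ∀ j < 9,
    ∃! m, m ∈ M ∧ x ∈ pts m ∧ y ∈ pts m ∧ c x m = j
  colle : ∀ m ∈ M, ∀ x ∈ pts m, c x m ≤ 9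
  col9 : none ∈ A → ∀ x y, pr x ∈ A → pr y ∈ A → ¬ SG x y →
    ∃! m, m ∈ M ∧ x ∈ pts m ∧ y ∈ pts m ∧ c x m = 9
  col90 : ∀ m ∈ M, ∀ x ∈ pts m, ∀ y ∈ pts m, x ≠ y → c x m = 9 → ¬ SG x y ∧ none ∈ A

theorem code22_lt (p : Option (Fin 7 × Fin 3)) : code22 p < 22 := by
  rcases p with _ | ⟨a, b⟩ <;> simp [code22]; omega

theorem code22_inj : Function.Injective code22 := by decide +kernel

theorem code24_lt (p : Fin 8 × Fin 3) : code24 p < 24 := by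
  rcases p with ⟨a, b⟩
  simp [code24]; omega

theorem code24_inj : Function.Injective code24 := by decide +kernel

theorem g2_code (p q : Option (Fin 7 × Fin 3)) :
    g2 (code22 p) (code22 q) = true ↔ SG p q := by
  unfold SG pr
  revert p q
  decide +kernel

theorem h2_code (p q : Fin 8 × Fin 3) : h2 (code24 p) (code24 q) = true ↔ p.1 = q.1 := by
  revert p q
  decide +kernel

/-- Colour of the block `m` at the point with code `x`. -/
theorem mem_pts22 (m : ℕ) (p) : p ∈ pts22 m ↔ has (code22 p) m = true := by
  simp [pts22]

theorem mem_pts24 (m : ℕ) (p) : p ∈ pts24 m ↔ has (code24 p) m = true := by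
  simp [pts24]

theorem g3_code (p q r : Option (Fin 7 × Fin 3)) :
    g3 (code22 p) (code22 q) (code22 r) = true ↔ (SG p q ∧ SG q r ∧ SG p r) := by
  simp only [g3, Bool.and_eq_true, g2_code, and_assoc]

theorem exu_congr {p q : ℕ → Prop} (h : ∀ m, p m ↔ q m) (hp : ∃! m, p m) : ∃! m, q m := by
  have : p = q := funext fun m => propext (h m)
  rwa [← this]

theorem ing22 (A : Finset (Option F)) (hA : A.card = 8) (hn : none ∈ A) :
    ∃ M pts c, Ing A M pts c := by
  classical
  -- enumeration of the finite points of `A`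
  obtain ⟨e, he⟩ : ∃ e : Fin 7 ↪ F, ∀ a : F, some a ∈ A ↔ a ∈ Set.range e := by
    have h7 : (Finset.eraseNone A).card = 7 := by
      rw [Finset.card_eraseNone_of_mem hn, hA]
    let E := (Finset.eraseNone A).equivFinOfCardEq h7
    refine ⟨⟨fun i => (E.symm i).1, fun i j h => E.symm.injective (Subtype.ext h)⟩, fun a => ?_⟩
    rw [← Finset.mem_eraseNone]
    constructor
    · intro h
      exact ⟨E ⟨a, h⟩, congrArg Subtype.val (E.symm_apply_apply ⟨a, h⟩)⟩
    · rintro ⟨i, rfl⟩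
      exact (E.symm i).2
  let φ : Option (Fin 7 × Fin 3) ↪ Option (F × Fin 3) :=
    (e.prodMap (Function.Embedding.refl _)).optionMap
  have hφn : φ none = none := rfl
  have hφs : ∀ a k, φ (some (a, k)) = some (e a, k) := fun a k => rfl
  have hsurj : ∀ x, pr x ∈ A ↔ ∃ p, φ p = x := by
    intro x
    rcases x with _ | ⟨a, k⟩
    · simp only [pr, Option.map_none, hn, true_iff]
      exact ⟨none, rfl⟩
    · simp only [pr, Option.map_some, he]
      constructor
      · rintro ⟨i, rfl⟩
        exact ⟨some (i, k), rfl⟩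
      · rintro ⟨_ | ⟨i, l⟩, h⟩
        · simp [hφn] at h
        · rw [hφs] at h
          simp only [Option.some.injEq, Prod.mk.injEq] at h
          exact ⟨i, h.1⟩
  have hSG : ∀ p q, SG (φ p) (φ q) ↔ SG p q := by
    intro p q
    rcases p with _ | ⟨a, k⟩ <;> rcases q with _ | ⟨b, l⟩ <;> simp [hφn, hφs, SG, pr]
  let inv : Option (F × Fin 3) → Option (Fin 7 × Fin 3) := Function.invFun φ
  have hinv : ∀ p, inv (φ p) = p := Function.leftInverse_invFun φ.injective
  let c : Option (F × Fin 3) → ℕ → ℕ := fun x m => nib m (code22 (inv x)) - 1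
  have hmem : ∀ m p, φ p ∈ (pts22 m).map φ ↔ has (code22 p) m = true := by
    intro m p
    rw [Finset.mem_map' , mem_pts22]
  have hsub : ∀ m, ∀ x ∈ (pts22 m).map φ, ∃ p, φ p = x := by
    intro m x hx
    obtain ⟨p, -, rfl⟩ := Finset.mem_map.1 hx
    exact ⟨p, rfl⟩
  refine ⟨L22.toFinset, fun m => (pts22 m).map φ, c, ?_, ?_, ?_, ?_, ?_, ?_, ?_, ?_, ?_⟩
  · intro m hm
    rw [Finset.card_map]
    exact card_pts22 m (List.mem_toFinset.1 hm)
  · intro m hm x hx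
    exact (hsurj x).2 (hsub m x hx)
  · intros
    exact hn
  · intro x y z hxy hyz hxz hx hy hz hG _
    obtain ⟨p, rfl⟩ := (hsurj x).1 hx
    obtain ⟨q, rfl⟩ := (hsurj y).1 hy
    obtain ⟨r, rfl⟩ := (hsurj z).1 hz
    have hpq : code22 p ≠ code22 q := fun h => hxy (by rw [code22_inj h])
    have hpr : code22 p ≠ code22 r := fun h => hxz (by rw [code22_inj h])
    have hqr : code22 q ≠ code22 r := fun h => hyz (by rw [code22_inj h])
    have h := ((spec22 _ _ (code22_lt p) (code22_lt q) hpq).2.2.2 _ (code22_lt r) hpr hqr).1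
      (by rw [← Bool.not_eq_true, g3_code]; simpa only [hSG] using hG)
    refine exu_congr (fun m => ?_) h
    simp only [hmem, List.mem_toFinset]
  · intro m hm x hx y hy z hz hxy hyz hxz hG
    obtain ⟨p, rfl⟩ := hsub m x hx
    obtain ⟨q, rfl⟩ := hsub m y hy
    obtain ⟨r, rfl⟩ := hsub m z hz
    have hpq : code22 p ≠ code22 q := fun h => hxy (by rw [code22_inj h])
    have hpr : code22 p ≠ code22 r := fun h => hxz (by rw [code22_inj h])
    have hqr : code22 q ≠ code22 r := fun h => hyz (by rw [code22_inj h])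
    simp only [hSG] at hG
    have h := ((spec22 _ _ (code22_lt p) (code22_lt q) hpq).2.2.2 _ (code22_lt r) hpr hqr).2
      ((g3_code _ _ _).2 hG) m (List.mem_toFinset.1 hm) ((hmem _ _).1 hx) ((hmem _ _).1 hy)
    rw [(hmem _ _).1 hz] at h
    exact absurd h (by simp)
  · intro x y hxy hx hy _ j hj
    obtain ⟨p, rfl⟩ := (hsurj x).1 hx
    obtain ⟨q, rfl⟩ := (hsurj y).1 hy
    have hpq : code22 p ≠ code22 q := fun h => hxy (by rw [code22_inj h])
    have h := (spec22 _ _ (code22_lt p) (code22_lt q) hpq).1 j hj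
    refine exu_congr (fun m => ?_) h
    simp only [hmem, List.mem_toFinset, c, hinv, has_iff]
    constructor
    · rintro ⟨h1, h2, h3, h4⟩
      exact ⟨h1, h2, h3, by omega⟩
    · rintro ⟨h1, h2, h3, h4⟩
      exact ⟨h1, h2, h3, by omega⟩
  · intro m hm x hx
    obtain ⟨p, rfl⟩ := hsub m x hx
    have := nib_le22 m (List.mem_toFinset.1 hm) _ (code22_lt p)
    simp only [c, hinv]
    omega
  · intro _ x y hx hy hG
    obtain ⟨p, rfl⟩ := (hsurj x).1 hx
    obtain ⟨q, rfl⟩ := (hsurj y).1 hy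
    rw [hSG] at hG
    have hpq : code22 p ≠ code22 q := fun h => hG (Or.inr (Or.inr (by rw [code22_inj h])))
    have h := (spec22 _ _ (code22_lt p) (code22_lt q) hpq).2.1
      (by rw [← Bool.not_eq_true, g2_code]; exact hG)
    refine exu_congr (fun m => ?_) h
    simp only [hmem, List.mem_toFinset, c, hinv, has_iff]
    constructor
    · rintro ⟨h1, h2, h3, h4⟩
      exact ⟨h1, h2, h3, by omega⟩
    · rintro ⟨h1, h2, h3, h4⟩
      exact ⟨h1, h2, h3, by omega⟩
  · intro m hm x hx y hy hxy hc
    obtain ⟨p, rfl⟩ := hsub m x hx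
    obtain ⟨q, rfl⟩ := hsub m y hy
    have hpq : code22 p ≠ code22 q := fun h => hxy (by rw [code22_inj h])
    refine ⟨fun hG => ?_, hn⟩
    rw [hSG] at hG
    refine (spec22 _ _ (code22_lt p) (code22_lt q) hpq).2.2.1 ((g2_code _ _).2 hG) m
      (List.mem_toFinset.1 hm) ((hmem _ _).1 hx) ((hmem _ _).1 hy) ?_
    simp only [c, hinv] at hc
    omega

theorem ing24 (A : Finset (Option F)) (hA : A.card = 8) (hn : none ∉ A) :
    ∃ M pts c, Ing A M pts c := by
  classical
  obtain ⟨e, he⟩ : ∃ e : Fin 8 ↪ F, ∀ a : F, some a ∈ A ↔ a ∈ Set.range e := by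
    have h7 : (Finset.eraseNone A).card = 8 := by
      rw [Finset.card_eraseNone_of_not_mem hn, hA]
    let E := (Finset.eraseNone A).equivFinOfCardEq h7
    refine ⟨⟨fun i => (E.symm i).1, fun i j h => E.symm.injective (Subtype.ext h)⟩, fun a => ?_⟩
    rw [← Finset.mem_eraseNone]
    constructor
    · intro h
      exact ⟨E ⟨a, h⟩, congrArg Subtype.val (E.symm_apply_apply ⟨a, h⟩)⟩
    · rintro ⟨i, rfl⟩
      exact (E.symm i).2
  let φ : (Fin 8 × Fin 3) ↪ Option (F × Fin 3) :=
    (e.prodMap (Function.Embedding.refl _)).trans Function.Embedding.some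
  have hφs : ∀ a k, φ (a, k) = some (e a, k) := fun a k => rfl
  have hsurj : ∀ x, pr x ∈ A ↔ ∃ p, φ p = x := by
    intro x
    rcases x with _ | ⟨a, k⟩
    · simp only [pr, Option.map_none, hn, false_iff]
      rintro ⟨⟨a, k⟩, h⟩
      simp [hφs] at h
    · simp only [pr, Option.map_some, he]
      constructor
      · rintro ⟨i, rfl⟩
        exact ⟨(i, k), rfl⟩
      · rintro ⟨⟨i, l⟩, h⟩
        rw [hφs] at h
        simp only [Option.some.injEq, Prod.mk.injEq] at h
        exact ⟨i, h.1⟩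
  have hpr : ∀ p q, pr (φ p) = pr (φ q) ↔ p.1 = q.1 := by
    rintro ⟨a, k⟩ ⟨b, l⟩
    simp [hφs, pr]
  have hSG : ∀ p q, SG (φ p) (φ q) ↔ p.1 = q.1 := by
    rintro ⟨a, k⟩ ⟨b, l⟩
    simp [hφs, SG, pr]
  have : Nonempty (Fin 8 × Fin 3) := ⟨(0, 0)⟩
  let inv : Option (F × Fin 3) → (Fin 8 × Fin 3) := Function.invFun φ
  have hinv : ∀ p, inv (φ p) = p := Function.leftInverse_invFun φ.injective
  let c : Option (F × Fin 3) → ℕ → ℕ := fun x m => nib m (code24 (inv x)) - 1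
  have hmem : ∀ m p, φ p ∈ (pts24 m).map φ ↔ has (code24 p) m = true := by
    intro m p
    rw [Finset.mem_map' , mem_pts24]
  have hsub : ∀ m, ∀ x ∈ (pts24 m).map φ, ∃ p, φ p = x := by
    intro m x hx
    obtain ⟨p, -, rfl⟩ := Finset.mem_map.1 hx
    exact ⟨p, rfl⟩
  have htrans : ∀ m ∈ L24, ∀ p q, p ≠ q → has (code24 p) m = true → has (code24 q) m = true →
      p.1 ≠ q.1 := by
    intro m hm p q hpq hp hq h
    have h4 := card_pts24 m hm
    obtain ⟨r, hr, hrn⟩ : ∃ r ∈ pts24 m, r ∉ ({p, q} : Finset (Fin 8 × Fin 3)) := by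
      apply Finset.exists_mem_notMem_of_card_lt_card
      have := Finset.card_le_two (a := p) (b := q)
      omega
    simp only [Finset.mem_insert, Finset.mem_singleton, not_or] at hrn
    have h := ((spec24 _ _ (code24_lt p) (code24_lt q) (fun h => hpq (code24_inj h))).2.2 _
      (code24_lt r) (fun h => hrn.1 (code24_inj h).symm) (fun h => hrn.2 (code24_inj h).symm)).2
      (by simp [(h2_code p q).2 h]) m hm hp hq
    rw [(mem_pts24 _ _).1 hr] at h
    exact absurd h (by simp)
  refine ⟨L24.toFinset, fun m => (pts24 m).map φ, c, ?_, ?_, ?_, ?_, ?_, ?_, ?_, ?_, ?_⟩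
  · intro m hm
    rw [Finset.card_map]
    exact card_pts24 m (List.mem_toFinset.1 hm)
  · intro m hm x hx
    exact (hsurj x).2 (hsub m x hx)
  · intro m hm x hx y hy hxy h
    obtain ⟨p, rfl⟩ := hsub m x hx
    obtain ⟨q, rfl⟩ := hsub m y hy
    exact absurd ((hpr _ _).1 h) (htrans m (List.mem_toFinset.1 hm) p q (fun h => hxy (by rw [h]))
      ((hmem _ _).1 hx) ((hmem _ _).1 hy))
  · intro x y z hxy hyz hxz hx hy hz hG hd
    obtain ⟨p, rfl⟩ := (hsurj x).1 hx
    obtain ⟨q, rfl⟩ := (hsurj y).1 hy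
    obtain ⟨r, rfl⟩ := (hsurj z).1 hz
    have hpq : code24 p ≠ code24 q := fun h => hxy (by rw [code24_inj h])
    have hpr' : code24 p ≠ code24 r := fun h => hxz (by rw [code24_inj h])
    have hqr : code24 q ≠ code24 r := fun h => hyz (by rw [code24_inj h])
    have hd := hd.resolve_left hn
    simp only [ne_eq, hpr] at hd
    have h := ((spec24 _ _ (code24_lt p) (code24_lt q) hpq).2.2 _ (code24_lt r) hpr' hqr).1
      (by rw [← Bool.not_eq_true]; simp only [Bool.or_eq_true, h2_code]
          exact fun h => h.elim (fun h => h.elim hd.1 hd.2.1) hd.2.2)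
    refine exu_congr (fun m => ?_) h
    simp only [hmem, List.mem_toFinset]
  · intro m hm x hx y hy z hz hxy hyz hxz hG
    obtain ⟨p, rfl⟩ := hsub m x hx
    obtain ⟨q, rfl⟩ := hsub m y hy
    exact absurd ((hSG _ _).1 hG.1) (htrans m (List.mem_toFinset.1 hm) p q
      (fun h => hxy (by rw [h])) ((hmem _ _).1 hx) ((hmem _ _).1 hy))
  · intro x y hxy hx hy hd j hj
    obtain ⟨p, rfl⟩ := (hsurj x).1 hx
    obtain ⟨q, rfl⟩ := (hsurj y).1 hy
    have hpq : code24 p ≠ code24 q := fun h => hxy (by rw [code24_inj h])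
    have hd := hd.resolve_right hn
    rw [ne_eq, hpr] at hd
    have h := (spec24 _ _ (code24_lt p) (code24_lt q) hpq).1 j hj
      (by rw [← Bool.not_eq_true, h2_code]; exact hd)
    refine exu_congr (fun m => ?_) h
    simp only [hmem, List.mem_toFinset, c, hinv, has_iff]
    constructor
    · rintro ⟨h1, h2, h3, h4⟩
      exact ⟨h1, h2, h3, by omega⟩
    · rintro ⟨h1, h2, h3, h4⟩
      exact ⟨h1, h2, h3, by omega⟩
  · intro m hm x hx
    obtain ⟨p, rfl⟩ := hsub m x hx
    have := nib_le24 m (List.mem_toFinset.1 hm) _ (code24_lt p)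
    simp only [c, hinv]
    omega
  · intro h
    exact absurd h hn
  · intro m hm x hx y hy hxy hc
    obtain ⟨p, rfl⟩ := hsub m x hx
    obtain ⟨q, rfl⟩ := hsub m y hy
    have hpq : code24 p ≠ code24 q := fun h => hxy (by rw [code24_inj h])
    exfalso
    refine (spec24 _ _ (code24_lt p) (code24_lt q) hpq).2.1 m
      (List.mem_toFinset.1 hm) ((hmem _ _).1 hx) ((hmem _ _).1 hy) ?_
    simp only [c, hinv] at hc
    omega

end Ing

theorem conv_rds {α β : Type} [Fintype α] [DecidableEq α] [Fintype β] (blk : β → Finset α)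
    (h4 : ∀ b, (blk b).card = 4)
    (h3 : ∀ x y z, x ≠ y → y ≠ z → x ≠ z → ∃! b, x ∈ blk b ∧ y ∈ blk b ∧ z ∈ blk b)
    (hr : ∀ x, ∃ (ι : Type) (_ : Finite ι) (c : β → ι), ∀ i y, y ≠ x →
      ∃! b, x ∈ blk b ∧ y ∈ blk b ∧ c b = i) :
    ExistsRDSQS (Fintype.card α) := by
  classical
  let f : α ↪ ℕ := (Fintype.equivFin α).toEmbedding.trans Fin.valEmbedding
  have hinj : ∀ b b', blk b = blk b' → b = b' := by
    intro b b' h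
    obtain ⟨x, hx, y, hy, z, hz, hxy, hxz, hyz⟩ := Finset.two_lt_card.1
      (show 2 < (blk b).card by rw [h4]; norm_num)
    exact (h3 x y z hxy hyz hxz).unique ⟨hx, hy, hz⟩ ⟨h ▸ hx, h ▸ hy, h ▸ hz⟩
  have hinj' : ∀ b b', (blk b).map f = (blk b').map f → b = b' := fun b b' h =>
    hinj b b' (Finset.map_injective f h)
  refine ⟨Finset.univ.map f, Finset.univ.image (fun b => (blk b).map f), ⟨?_, ?_, ?_⟩, ?_⟩
  · simp
  · intro b hb
    obtain ⟨b, -, rfl⟩ := Finset.mem_image.1 hb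
    exact ⟨Finset.map_subset_map.2 (Finset.subset_univ _), by rw [Finset.card_map, h4]⟩
  · intro T hT hc
    obtain ⟨x, y, z, hxy, hxz, hyz, rfl⟩ := Finset.card_eq_three.1 hc
    obtain ⟨x, -, rfl⟩ := Finset.mem_map.1 (hT (by simp : x ∈ _))
    obtain ⟨y, -, rfl⟩ := Finset.mem_map.1 (hT (by simp : y ∈ _))
    obtain ⟨z, -, rfl⟩ := Finset.mem_map.1 (hT (by simp : z ∈ _))
    have key : ∀ b, ({f x, f y, f z} : Finset ℕ) ⊆ (blk b).map f ↔
        x ∈ blk b ∧ y ∈ blk b ∧ z ∈ blk b := by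
      intro b
      simp only [Finset.insert_subset_iff, Finset.singleton_subset_iff, Finset.mem_map']
    obtain ⟨b, hb, hu⟩ := h3 x y z (fun h => hxy (by rw [h])) (fun h => hyz (by rw [h]))
      (fun h => hxz (by rw [h]))
    refine ⟨(blk b).map f, ⟨Finset.mem_image_of_mem _ (Finset.mem_univ _), (key b).2 hb⟩, ?_⟩
    rintro _ ⟨hb', hs⟩
    obtain ⟨b', -, rfl⟩ := Finset.mem_image.1 hb'
    rw [hu b' ((key b').1 hs)]
  · intro x hx
    obtain ⟨x, -, rfl⟩ := Finset.mem_map.1 hx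
    obtain ⟨ι, hι, c, hc⟩ := hr x
    have := Fintype.ofFinite ι
    let E := Fintype.equivFin ι
    have herase : ∀ b y, f y ∈ ((blk b).map f).erase (f x) ↔ y ≠ x ∧ y ∈ blk b := by
      intro b y
      simp only [Finset.mem_erase, ne_eq, f.injective.eq_iff, Finset.mem_map']
    have heinj : ∀ b b', x ∈ blk b → x ∈ blk b' →
        ((blk b).map f).erase (f x) = ((blk b').map f).erase (f x) → b = b' := by
      intro b b' h h' he
      apply hinj'
      rw [← Finset.insert_erase (Finset.mem_map_of_mem f h), he,
        Finset.insert_erase (Finset.mem_map_of_mem f h')]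
    have hmemD : ∀ t, t ∈ derivedBlocks (Finset.univ.image (fun b => (blk b).map f)) (f x) ↔
        ∃ b, x ∈ blk b ∧ ((blk b).map f).erase (f x) = t := by
      intro t
      simp only [derivedBlocks, Finset.mem_image, Finset.mem_filter, Finset.mem_univ, true_and]
      constructor
      · rintro ⟨_, ⟨⟨b, rfl⟩, hb⟩, rfl⟩
        exact ⟨b, (Finset.mem_map' f).1 hb, rfl⟩
      · rintro ⟨b, hb, rfl⟩
        exact ⟨_, ⟨⟨b, rfl⟩, (Finset.mem_map' f).2 hb⟩, rfl⟩
    let P : Fin (Fintype.card ι) → Finset (Finset ℕ) := fun i =>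
      (Finset.univ.filter (fun b => x ∈ blk b ∧ c b = E.symm i)).image
        (fun b => ((blk b).map f).erase (f x))
    have hmemP : ∀ i t, t ∈ P i ↔
        ∃ b, (x ∈ blk b ∧ c b = E.symm i) ∧ ((blk b).map f).erase (f x) = t := by
      intro i t
      simp [P]
    refine ⟨Fintype.card ι, P, fun i => ⟨?_, ?_⟩, ?_, ?_⟩
    · intro t ht
      obtain ⟨b, hb, rfl⟩ := (hmemP i t).1 ht
      exact Finset.erase_subset_erase _ (Finset.map_subset_map.2 (Finset.subset_univ _))
    · intro y hy
      obtain ⟨hyx, hy⟩ := Finset.mem_erase.1 hy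
      obtain ⟨y, -, rfl⟩ := Finset.mem_map.1 hy
      have hyx : y ≠ x := fun h => hyx (by rw [h])
      obtain ⟨b, ⟨hb1, hb2, hb3⟩, hu⟩ := hc (E.symm i) y hyx
      refine ⟨((blk b).map f).erase (f x), ⟨(hmemP _ _).2 ⟨b, ⟨hb1, hb3⟩, rfl⟩,
        (herase b y).2 ⟨hyx, hb2⟩⟩, ?_⟩
      rintro t ⟨ht, hyt⟩
      obtain ⟨b', hb', rfl⟩ := (hmemP i t).1 ht
      rw [hu b' ⟨hb'.1, ((herase b' y).1 hyt).2, hb'.2⟩]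
    · intro i t ht
      obtain ⟨b, hb, rfl⟩ := (hmemP i t).1 ht
      exact (hmemD _).2 ⟨b, hb.1, rfl⟩
    · intro t ht
      obtain ⟨b, hb, rfl⟩ := (hmemD t).1 ht
      refine ⟨E (c b), (hmemP _ _).2 ⟨b, ⟨hb, by simp⟩, rfl⟩, ?_⟩
      intro j hj
      obtain ⟨b', hb', he⟩ := (hmemP j _).1 hj
      rw [heinj b b' hb hb'.1 he.symm, hb'.2, Equiv.apply_symm_apply]

theorem composite {F O : Type} [Fintype F] [DecidableEq F] [Fintype O]
    (circ : O → Finset (Option F)) (h8 : ∀ A, (circ A).card = 8)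
    (h3 : ∀ p q r, p ≠ q → q ≠ r → p ≠ r → ∃! A, p ∈ circ A ∧ q ∈ circ A ∧ r ∈ circ A)
    (hr : ∀ p, ∃ (ι : Type) (_ : Finite ι) (c : O → ι), ∀ i q, q ≠ p →
      ∃! A, p ∈ circ A ∧ q ∈ circ A ∧ c A = i) :
    ExistsRDSQS (3 * Fintype.card F + 1) := by
  classical
  have hcard : Fintype.card (Option (F × Fin 3)) = 3 * Fintype.card F + 1 := by
    simp [mul_comm]
  rw [← hcard]
  have hing : ∀ A : O, ∃ M pts c, Ing (circ A) M pts c := by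
    intro A
    by_cases hn : none ∈ circ A
    · exact ing22 _ (h8 A) hn
    · exact ing24 _ (h8 A) hn
  choose M pts c hI using hing
  let gb : F → Finset (Option (F × Fin 3)) := fun a =>
    insert none (Finset.univ.image (fun k : Fin 3 => some (a, k)))
  have hgb : ∀ a x, x ∈ gb a ↔ x = none ∨ pr x = some a := by
    rintro a (_ | ⟨b, k⟩)
    · simp [gb]
    · simp [gb, pr, eq_comm]
  let blk : F ⊕ (Σ A : O, {m // m ∈ M A}) → Finset (Option (F × Fin 3)) :=
    Sum.elim gb (fun s => pts s.1 s.2.1)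
  have prn : ∀ x : Option (F × Fin 3), pr x = none ↔ x = none := by
    rintro (_ | ⟨b, k⟩) <;> simp [pr]
  -- a group block through two points of a common group block
  have hgrp : ∀ x y, x ≠ y → SG x y → ∃ a, ∀ b, (x ∈ gb b ∧ y ∈ gb b) ↔ b = a := by
    intro x y hxy hG
    simp only [hgb]
    rcases x with _ | ⟨a, k⟩ <;> rcases y with _ | ⟨b, l⟩
    · exact absurd rfl hxy
    · exact ⟨b, fun d => by simp [pr, eq_comm]⟩
    · exact ⟨a, fun d => by simp [pr, eq_comm]⟩
    · simp [SG, pr] at hG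
      subst hG
      exact ⟨a, fun d => by simp [pr, eq_comm]⟩
  have hgSG : ∀ a x y, x ∈ gb a → y ∈ gb a → SG x y := by
    intro a x y hx hy
    rw [hgb] at hx hy
    unfold SG
    rcases hx with hx | hx
    · exact Or.inl hx
    rcases hy with hy | hy
    · exact Or.inr (Or.inl hy)
    · exact Or.inr (Or.inr (hx.trans hy.symm))
  refine conv_rds blk ?_ ?_ ?_
  · rintro (a | ⟨A, m, hm⟩)
    · simp only [blk, Sum.elim_inl, gb]
      rw [Finset.card_insert_of_notMem (by simp), Finset.card_image_of_injective _ (by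
        intro i j h; simpa using h)]
      simp
    · exact (hI A).card4 m hm
  · intro x y z hxy hyz hxz
    by_cases hG : SG x y ∧ SG y z ∧ SG x z
    · obtain ⟨a, ha⟩ : ∃ a, x ∈ gb a ∧ y ∈ gb a ∧ z ∈ gb a := by
        obtain ⟨h1, h2, h3⟩ := hG
        simp only [hgb]
        rcases x with _ | ⟨a, k⟩
        · rcases y with _ | ⟨b, l⟩
          · exact absurd rfl hxy
          · rcases z with _ | ⟨d, l⟩
            · exact absurd rfl hxz
            · simp_all [SG, pr]
        · refine ⟨a, ?_⟩
          rcases y with _ | ⟨b, l⟩ <;> rcases z with _ | ⟨d, l⟩ <;> simp_all [SG, pr]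
      obtain ⟨a', ha'⟩ := hgrp x y hxy hG.1
      refine ⟨Sum.inl a, ha, ?_⟩
      rintro (b | ⟨A, m, hm⟩) hb
      · have e1 := (ha' a).1 ⟨ha.1, ha.2.1⟩
        have e2 := (ha' b).1 ⟨hb.1, hb.2.1⟩
        rw [e1, e2]
      · exact absurd hG ((hI A).tri0 m hm x hb.1 y hb.2.1 z hb.2.2 hxy hyz hxz)
    · obtain ⟨p, q, r, hpq, hqr, hpr, hA⟩ : ∃ p q r : Option F, p ≠ q ∧ q ≠ r ∧ p ≠ r ∧
          ∀ S : Finset (Option F), (p ∈ S ∧ q ∈ S ∧ r ∈ S) ↔ (pr x ∈ S ∧ pr y ∈ S ∧ pr z ∈ S ∧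
            (none ∈ S ∨ (pr x ≠ pr y ∧ pr y ≠ pr z ∧ pr x ≠ pr z))) := by
        have nn : ∀ u v : Option (F × Fin 3), u ≠ v → pr u = pr v → pr u ≠ none ∧ pr v ≠ none := by
          intro u v huv h
          refine ⟨fun h' => huv ?_, fun h' => huv ?_⟩
          · rw [(prn u).1 h', (prn v).1 (h ▸ h')]
          · rw [(prn v).1 h', (prn u).1 (h ▸ h')]
        simp only [SG, ← prn] at hG
        by_cases e1 : pr x = pr y
        · have := nn x y hxy e1
          refine ⟨none, pr x, pr z, ?_, ?_, ?_, ?_⟩ <;> grind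
        by_cases e2 : pr y = pr z
        · have := nn y z hyz e2
          refine ⟨none, pr y, pr x, ?_, ?_, ?_, ?_⟩ <;> grind
        by_cases e3 : pr x = pr z
        · have := nn x z hxz e3
          refine ⟨none, pr x, pr y, ?_, ?_, ?_, ?_⟩ <;> grind
        exact ⟨pr x, pr y, pr z, e1, e2, e3, fun S => by tauto⟩
      obtain ⟨A, hAm, hAu⟩ := h3 p q r hpq hqr hpr
      obtain ⟨hx, hy, hz, hd⟩ := (hA _).1 hAm
      obtain ⟨m, ⟨hm, hmx⟩, hmu⟩ := (hI A).tri x y z hxy hyz hxz hx hy hz hG hd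
      refine ⟨Sum.inr ⟨A, m, hm⟩, hmx, ?_⟩
      rintro (b | ⟨A', m', hm'⟩) hb
      · exact absurd ⟨hgSG b _ _ hb.1 hb.2.1, hgSG b _ _ hb.2.1 hb.2.2, hgSG b _ _ hb.1 hb.2.2⟩ hG
      · have hb : x ∈ pts A' m' ∧ y ∈ pts A' m' ∧ z ∈ pts A' m' := hb
        have hinf := (hI A').inf m' hm'
        have : A' = A := hAu A' ((hA _).2 ⟨(hI A').sub m' hm' x hb.1, (hI A').sub m' hm' y hb.2.1,
          (hI A').sub m' hm' z hb.2.2, by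
            by_cases e1 : pr x = pr y
            · exact Or.inl (hinf x hb.1 y hb.2.1 hxy e1)
            by_cases e2 : pr y = pr z
            · exact Or.inl (hinf y hb.2.1 z hb.2.2 hyz e2)
            by_cases e3 : pr x = pr z
            · exact Or.inl (hinf x hb.1 z hb.2.2 hxz e3)
            exact Or.inr ⟨e1, e2, e3⟩⟩)
        subst this
        have : m' = m := hmu m' ⟨hm', hb⟩
        subst this
        rfl
  · intro x
    obtain ⟨ι, hι, ρ, hρ⟩ := hr (pr x)
    let col : F ⊕ (Σ A : O, {m // m ∈ M A}) → (ι × Fin 9) ⊕ Unit :=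
      Sum.elim (fun _ => Sum.inr ()) (fun s =>
        if h : c s.1 x s.2.1 < 9 then Sum.inl (ρ s.1, ⟨_, h⟩) else Sum.inr ())
    have col1 : ∀ A m hm i (j : Fin 9), col (Sum.inr ⟨A, m, hm⟩) = Sum.inl (i, j) ↔
        ρ A = i ∧ c A x m = j := by
      intro A m hm i j
      simp only [col, Sum.elim_inr]
      split_ifs with h
      · simp [Fin.ext_iff]
      · simp only [false_iff, not_and]
        intro _ h'
        have := j.2
        omega
    have col2 : ∀ A m hm, x ∈ pts A m → (col (Sum.inr ⟨A, m, hm⟩) = Sum.inr () ↔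
        c A x m = 9) := by
      intro A m hm hx
      have := (hI A).colle m hm x hx
      simp only [col, Sum.elim_inr]
      split_ifs with h
      · simp only [false_iff]
        omega
      · simp only [true_iff]
        omega
    refine ⟨(ι × Fin 9) ⊕ Unit, inferInstance, col, ?_⟩
    rintro (⟨i, j⟩ | ⟨⟩) y hyx
    · obtain ⟨q, hq, hA⟩ : ∃ q, q ≠ pr x ∧ ∀ S : Finset (Option F), (pr x ∈ S ∧ q ∈ S) ↔
          (pr x ∈ S ∧ pr y ∈ S ∧ (pr x ≠ pr y ∨ none ∈ S)) := by
        by_cases e : pr x = pr y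
        · refine ⟨none, ?_, ?_⟩
          · intro h
            exact hyx (by rw [(prn x).1 h.symm, (prn y).1 (e ▸ h.symm)])
          · intro S
            rw [← e]
            tauto
        · exact ⟨pr y, fun h => e h.symm, fun S => by tauto⟩
      obtain ⟨A, ⟨hA1, hA2, hA3⟩, hAu⟩ := hρ i q hq
      obtain ⟨hx, hy, hd⟩ := (hA _).1 ⟨hA1, hA2⟩
      obtain ⟨m, ⟨hm, hmx, hmy, hmc⟩, hmu⟩ := (hI A).col x y hyx.symm hx hy hd j j.2
      refine ⟨Sum.inr ⟨A, m, hm⟩, ⟨hmx, hmy, (col1 _ _ _ _ _).2 ⟨hA3, hmc⟩⟩, ?_⟩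
      rintro (b | ⟨A', m', hm'⟩) ⟨hb1, hb2, hb3⟩
      · simp [col] at hb3
      · have hb1 : x ∈ pts A' m' := hb1
        have hb2 : y ∈ pts A' m' := hb2
        obtain ⟨hb3, hb4⟩ := (col1 _ _ _ _ _).1 hb3
        obtain ⟨h1, h2⟩ := (hA (circ A')).2 ⟨(hI A').sub m' hm' x hb1, (hI A').sub m' hm' y hb2, by
            by_cases e1 : pr x = pr y
            · exact Or.inr ((hI A').inf m' hm' x hb1 y hb2 hyx.symm e1)
            · exact Or.inl e1⟩
        have : A' = A := hAu A' ⟨h1, h2, hb3⟩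
        subst this
        have : m' = m := hmu m' ⟨hm', hb1, hb2, hb4⟩
        subst this
        rfl
    · by_cases hG : SG x y
      · obtain ⟨a, ha⟩ := hgrp x y hyx.symm hG
        obtain ⟨ha1, ha2⟩ := (ha a).2 rfl
        refine ⟨Sum.inl a, ⟨ha1, ha2, rfl⟩, ?_⟩
        rintro (b | ⟨A', m', hm'⟩) ⟨hb1, hb2, hb3⟩
        · rw [(ha b).1 ⟨hb1, hb2⟩]
        · exact absurd hG ((hI A').col90 m' hm' x hb1 y hb2 hyx.symm
            ((col2 _ _ _ hb1).1 hb3)).1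
      · have hG' : ¬ (pr x = none ∨ pr y = none ∨ pr x = pr y) := by
          simpa only [SG, ← prn] using hG
        push Not at hG'
        obtain ⟨A, ⟨hA1, hA2, hA3⟩, hAu⟩ := h3 (pr x) (pr y) none hG'.2.2 hG'.2.1 hG'.1
        obtain ⟨m, ⟨hm, hmx, hmy, hmc⟩, hmu⟩ := (hI A).col9 hA3 x y hA1 hA2 hG
        refine ⟨Sum.inr ⟨A, m, hm⟩, ⟨hmx, hmy, (col2 _ _ _ hmx).2 hmc⟩, ?_⟩
        rintro (b | ⟨A', m', hm'⟩) ⟨hb1, hb2, hb3⟩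
        · exact absurd (hgSG b _ _ hb1 hb2) hG
        · have hb1 : x ∈ pts A' m' := hb1
          have hb2 : y ∈ pts A' m' := hb2
          have hb3 := (col2 _ _ _ hb1).1 hb3
          have hn := ((hI A').col90 m' hm' x hb1 y hb2 hyx.symm hb3).2
          have : A' = A := hAu A' ⟨(hI A').sub m' hm' x hb1, (hI A').sub m' hm' y hb2, hn⟩
          subst this
          have : m' = m := hmu m' ⟨hm', hb1, hb2, hb3⟩
          subst this
          rfl

section Outer

open OnePoint Matrix
open scoped Pointwise

/-- The Moebius map `z ↦ a z + b`. -/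
noncomputable def affM {K : Type} [Field K] (a b : K) (ha : a ≠ 0) : GL (Fin 2) K :=
  Matrix.GeneralLinearGroup.mkOfDetNeZero !![a, b; 0, 1] (by simpa [Matrix.det_fin_two] using ha)

theorem affM_inf {K : Type} [Field K] [DecidableEq K] (a b : K) (ha : a ≠ 0) :
    affM a b ha • (∞ : OnePoint K) = ∞ := by
  rw [smul_infty_eq_ite]
  simp [affM, Matrix.GeneralLinearGroup.mkOfDetNeZero]

theorem affM_coe {K : Type} [Field K] [DecidableEq K] (a b : K) (ha : a ≠ 0) (x : K) :
    affM a b ha • (x : OnePoint K) = ((a * x + b : K) : OnePoint K) := by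
  rw [smul_some_eq_ite]
  simp [affM, Matrix.GeneralLinearGroup.mkOfDetNeZero]

theorem to_inf {K : Type} [Field K] [DecidableEq K] (p : OnePoint K) :
    ∃ g : GL (Fin 2) K, g • p = ∞ := by
  induction p using OnePoint.rec with
  | infty => exact ⟨1, one_smul _ _⟩
  | coe a =>
    refine ⟨Matrix.GeneralLinearGroup.mkOfDetNeZero !![0, 1; 1, -a]
      (by simp [Matrix.det_fin_two]), ?_⟩
    rw [smul_some_eq_ite]
    simp [Matrix.GeneralLinearGroup.mkOfDetNeZero]

theorem trans3 {K : Type} [Field K] [DecidableEq K] (p q r : OnePoint K)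
    (hpq : p ≠ q) (hqr : q ≠ r) (hpr : p ≠ r) :
    ∃ g : GL (Fin 2) K, g • (∞ : OnePoint K) = p ∧ g • ((0 : K) : OnePoint K) = q ∧
      g • ((1 : K) : OnePoint K) = r := by
  obtain ⟨h, hp⟩ := to_inf p
  have hq : h • q ≠ ∞ := fun e => hpq (smul_left_cancel h (hp.trans e.symm))
  have hr : h • r ≠ ∞ := fun e => hpr (smul_left_cancel h (hp.trans e.symm))
  obtain ⟨y, hy⟩ := OnePoint.ne_infty_iff_exists.1 hq
  obtain ⟨z, hz⟩ := OnePoint.ne_infty_iff_exists.1 hr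
  have hyz : z - y ≠ 0 := by
    intro e
    have : z = y := sub_eq_zero.1 e
    apply hqr
    apply smul_left_cancel h
    rw [← hy, ← hz, this]
  refine ⟨h⁻¹ * affM (z - y) y hyz, ?_, ?_, ?_⟩
  · rw [mul_smul, affM_inf, inv_smul_eq_iff, hp]
  · rw [mul_smul, affM_coe, inv_smul_eq_iff, ← hy]
    simp
  · rw [mul_smul, affM_coe, inv_smul_eq_iff, ← hz]
    simp

theorem fix_inf {K : Type} [Field K] [DecidableEq K] (g : GL (Fin 2) K)
    (h : g • (∞ : OnePoint K) = ∞) :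
    ∃ a b : K, a ≠ 0 ∧ ∀ x : K, g • (x : OnePoint K) = ((a * x + b : K) : OnePoint K) := by
  rw [smul_infty_eq_self_iff] at h
  have hd := g.det_ne_zero
  rw [Matrix.det_fin_two, h, mul_zero, sub_zero] at hd
  have h0 := left_ne_zero_of_mul hd
  have h1 := right_ne_zero_of_mul hd
  refine ⟨g 0 0 / g 1 1, g 0 1 / g 1 1, div_ne_zero h0 h1, fun x => ?_⟩
  rw [smul_some_eq_ite, h, zero_mul, zero_add, if_neg h1]
  congr 1
  field_simp

theorem fix3 {K : Type} [Field K] [DecidableEq K] (g : GL (Fin 2) K)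
    (h : g • (∞ : OnePoint K) = ∞) (h0 : g • ((0 : K) : OnePoint K) = ((0 : K) : OnePoint K))
    (h1 : g • ((1 : K) : OnePoint K) = ((1 : K) : OnePoint K)) (x : OnePoint K) : g • x = x := by
  obtain ⟨a, b, -, hab⟩ := fix_inf g h
  rw [hab, OnePoint.coe_eq_coe] at h0 h1
  have hb : b = 0 := by simpa using h0
  have ha : a = 1 := by simpa [hb] using h1
  induction x using OnePoint.rec with
  | infty => exact h
  | coe x => rw [hab, ha, hb, one_mul, add_zero]

variable {K F : Type} [Field K] [DecidableEq K] [Field F] [DecidableEq F] (i : K →+* F)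

/-- The base circle. -/
def B0 : Set (OnePoint F) := Set.range (OnePoint.map i)

def IsCirc (S : Set (OnePoint F)) : Prop := ∃ g : GL (Fin 2) F, S = g • B0 i

theorem map_inj : Function.Injective (OnePoint.map i) :=
  Option.map_injective i.injective

theorem B0_stab (k : GL (Fin 2) K) : (k.map i) • B0 i = B0 i := by
  ext x
  constructor
  · rintro ⟨_, ⟨z, rfl⟩, rfl⟩
    exact ⟨k • z, OnePoint.map_smul i k z⟩
  · rintro ⟨z, rfl⟩
    refine ⟨OnePoint.map i (k⁻¹ • z), ⟨_, rfl⟩, ?_⟩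
    change (k.map i) • _ = _
    rw [← OnePoint.map_smul, smul_inv_smul]

theorem inf_mem : (∞ : OnePoint F) ∈ B0 i := ⟨∞, by simp⟩

theorem coe_mem (x : F) : (x : OnePoint F) ∈ B0 i ↔ ∃ k, i k = x := by
  constructor
  · rintro ⟨z, hz⟩
    induction z using OnePoint.rec with
    | infty => simp at hz
    | coe z => exact ⟨z, by simpa using hz⟩
  · rintro ⟨k, rfl⟩
    exact ⟨k, by simp⟩

theorem circ_eq (S : Set (OnePoint F)) (hS : IsCirc i S) (g : GL (Fin 2) F)
    (h0 : g • (∞ : OnePoint F) ∈ S) (h1 : g • ((0 : F) : OnePoint F) ∈ S)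
    (h2 : g • ((1 : F) : OnePoint F) ∈ S) : S = g • B0 i := by
  obtain ⟨g', rfl⟩ := hS
  obtain ⟨_, ⟨a, rfl⟩, ha⟩ := h0
  obtain ⟨_, ⟨b, rfl⟩, hb⟩ := h1
  obtain ⟨_, ⟨c, rfl⟩, hc⟩ := h2
  change g' • _ = _ at ha hb hc
  obtain ⟨k, hk0, hk1, hk2⟩ := trans3 a b c
    (by rintro rfl
        have := smul_left_cancel g (ha.symm.trans hb)
        exact OnePoint.infty_ne_coe _ this)
    (by rintro rfl
        have := smul_left_cancel g (hb.symm.trans hc)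
        simp at this)
    (by rintro rfl
        have := smul_left_cancel g (ha.symm.trans hc)
        exact OnePoint.infty_ne_coe _ this)
  have e0 : OnePoint.map i (∞ : OnePoint K) = ∞ := by simp
  have e1 : OnePoint.map i ((0 : K) : OnePoint K) = ((0 : F) : OnePoint F) := by simp
  have e2 : OnePoint.map i ((1 : K) : OnePoint K) = ((1 : F) : OnePoint F) := by simp
  have key : ∀ x : OnePoint F, (g⁻¹ * (g' * k.map i)) • x = x := by
    apply fix3
    · rw [mul_smul, mul_smul, ← e0, ← OnePoint.map_smul, hk0, ha, e0, inv_smul_smul]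
    · rw [mul_smul, mul_smul, ← e1, ← OnePoint.map_smul, hk1, hb, e1, inv_smul_smul]
    · rw [mul_smul, mul_smul, ← e2, ← OnePoint.map_smul, hk2, hc, e2, inv_smul_smul]
  have key2 : ∀ x : OnePoint F, (g' * k.map i) • x = g • x := by
    intro x
    have := key x
    rwa [mul_smul, inv_smul_eq_iff] at this
  have e : g' • B0 i = (g' * k.map i) • B0 i := by rw [mul_smul, B0_stab]
  rw [e]
  ext x
  simp only [Set.mem_smul_set, key2]

theorem line_of_circ (S : Set (OnePoint F)) (hS : IsCirc i S) (h : ∞ ∈ S) :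
    ∃ a b : F, a ≠ 0 ∧ ∀ x : F, (x : OnePoint F) ∈ S ↔ ∃ k, a * i k + b = x := by
  obtain ⟨g, rfl⟩ := hS
  obtain ⟨_, ⟨p, rfl⟩, hp⟩ := h
  change g • _ = _ at hp
  obtain ⟨k, hk⟩ := to_inf p
  have hk' : k⁻¹ • (∞ : OnePoint K) = p := by rw [← hk, inv_smul_smul]
  rw [← B0_stab i k⁻¹, ← mul_smul]
  have e0 : OnePoint.map i (∞ : OnePoint K) = ∞ := by simp
  obtain ⟨a, b, ha, hab⟩ := fix_inf (g * (k⁻¹).map i) (by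
    rw [mul_smul, ← e0, ← OnePoint.map_smul, hk', hp, e0])
  have hinf : (g * (k⁻¹).map i) • (∞ : OnePoint F) = ∞ := by
    rw [mul_smul, ← e0, ← OnePoint.map_smul, hk', hp, e0]
  refine ⟨a, b, ha, fun x => ?_⟩
  constructor
  · rintro ⟨_, ⟨z, rfl⟩, hz⟩
    change (g * (k⁻¹).map i) • _ = _ at hz
    induction z using OnePoint.rec with
    | infty =>
      rw [e0, hinf] at hz
      exact absurd hz (OnePoint.infty_ne_coe _)
    | coe z =>
      rw [OnePoint.map_some, hab, OnePoint.coe_eq_coe] at hz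
      exact ⟨z, hz⟩
  · rintro ⟨z, rfl⟩
    refine ⟨_, ⟨(z : OnePoint K), rfl⟩, ?_⟩
    change (g * (k⁻¹).map i) • _ = _
    rw [OnePoint.map_some, hab]

theorem smul_circ (S : Set (OnePoint F)) (hS : IsCirc i S) (g : GL (Fin 2) F) :
    IsCirc i (g • S) := by
  obtain ⟨g', rfl⟩ := hS
  exact ⟨g * g', by rw [mul_smul]⟩

/-- Differences of the finite points. -/
def dif (S : Set (OnePoint F)) : Set F :=
  {u | ∃ x y : F, (x : OnePoint F) ∈ S ∧ (y : OnePoint F) ∈ S ∧ x - y = u}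

/-- The one-dimensional subspace spanned by `a`. -/
def spanK (a : F) : Set F := {u | ∃ k, a * i k = u}

theorem dif_line (S : Set (OnePoint F)) (a b : F)
    (h : ∀ x : F, (x : OnePoint F) ∈ S ↔ ∃ k, a * i k + b = x) : dif S = spanK i a := by
  ext u
  constructor
  · rintro ⟨x, y, hx, hy, rfl⟩
    obtain ⟨k, rfl⟩ := (h x).1 hx
    obtain ⟨l, rfl⟩ := (h y).1 hy
    exact ⟨k - l, by rw [map_sub]; ring⟩
  · rintro ⟨k, rfl⟩
    exact ⟨a * i k + b, b, (h _).2 ⟨k, rfl⟩, (h _).2 ⟨0, by simp⟩, by ring⟩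

theorem mem_line_iff (S : Set (OnePoint F)) (hS : IsCirc i S) (h : ∞ ∈ S) (y : F)
    (hy : (y : OnePoint F) ∈ S) (x : F) : (x : OnePoint F) ∈ S ↔ x - y ∈ dif S := by
  constructor
  · intro hx
    exact ⟨x, y, hx, hy, rfl⟩
  · obtain ⟨a, b, ha, hab⟩ := line_of_circ i S hS h
    rw [dif_line i S a b hab]
    rintro ⟨k, hk⟩
    obtain ⟨l, rfl⟩ := (hab y).1 hy
    exact (hab x).2 ⟨k + l, by rw [map_add]; linear_combination hk⟩

theorem aff_line (a b : F) (ha : a ≠ 0) (x : F) :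
    (x : OnePoint F) ∈ affM a b ha • B0 i ↔ ∃ k, a * i k + b = x := by
  constructor
  · rintro ⟨_, ⟨z, rfl⟩, hz⟩
    change affM a b ha • _ = _ at hz
    induction z using OnePoint.rec with
    | infty =>
      rw [OnePoint.map_infty, affM_inf] at hz
      exact absurd hz (OnePoint.infty_ne_coe _)
    | coe z =>
      rw [OnePoint.map_some, affM_coe, OnePoint.coe_eq_coe] at hz
      exact ⟨z, hz⟩
  · rintro ⟨z, rfl⟩
    refine ⟨_, ⟨(z : OnePoint K), rfl⟩, ?_⟩
    change affM a b ha • _ = _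
    rw [OnePoint.map_some, affM_coe]

theorem circ_res (p : OnePoint F) : ∃ (ι : Type)
    (c : {S // IsCirc i S} → ι), (∃ f : ι → Set F, Function.Injective f) ∧ ∀ d q, q ≠ p →
      ∃! S : {S // IsCirc i S}, p ∈ S.1 ∧ q ∈ S.1 ∧ c S = d := by
  classical
  obtain ⟨h, hp⟩ := to_inf p
  have hmem : ∀ (S : Set (OnePoint F)) x, h • x ∈ h • S ↔ x ∈ S := fun S x =>
    Set.smul_mem_smul_set_iff
  let c : {S // IsCirc i S} → {D : Set F // ∃ a, a ≠ 0 ∧ D = spanK i a} := fun S =>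
    if hD : ∃ a, a ≠ 0 ∧ dif (h • S.1) = spanK i a then ⟨_, hD⟩ else ⟨_, 1, one_ne_zero, rfl⟩
  have hc : ∀ S : {S // IsCirc i S}, p ∈ S.1 → (c S).1 = dif (h • S.1) := by
    intro S hS
    have hS' : ∞ ∈ h • S.1 := by rw [← hp, hmem]; exact hS
    obtain ⟨a, b, ha, hab⟩ := line_of_circ i _ (smul_circ i _ S.2 h) hS'
    have hD : ∃ a, a ≠ 0 ∧ dif (h • S.1) = spanK i a := ⟨a, ha, dif_line i _ a b hab⟩
    simp only [c, dif_pos hD]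
  refine ⟨_, c, ⟨_, Subtype.val_injective⟩, ?_⟩
  rintro ⟨D, a, ha, hD⟩ q hq
  have hq' : h • q ≠ ∞ := fun e => hq (smul_left_cancel h (e.trans hp.symm))
  obtain ⟨y, hy⟩ := OnePoint.ne_infty_iff_exists.1 hq'
  have hS1 : IsCirc i (affM a y ha • B0 i) := ⟨_, rfl⟩
  have hinf : (∞ : OnePoint F) ∈ affM a y ha • B0 i := ⟨∞, inf_mem i, affM_inf a y ha⟩
  have hyS : (y : OnePoint F) ∈ affM a y ha • B0 i := (aff_line i a y ha y).2 ⟨0, by simp⟩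
  have hdS : dif (affM a y ha • B0 i) = D := by
    rw [hD]
    exact dif_line i _ a y (aff_line i a y ha)
  have hpS : p ∈ h⁻¹ • affM a y ha • B0 i := by
    rw [← hmem, smul_inv_smul, hp]
    exact hinf
  refine ⟨⟨h⁻¹ • affM a y ha • B0 i, smul_circ i _ hS1 _⟩, ⟨hpS, ?_, ?_⟩, ?_⟩
  · rw [← hmem, smul_inv_smul, ← hy]
    exact hyS
  · apply Subtype.ext
    rw [hc _ hpS]
    simp only [smul_inv_smul]
    exact hdS
  · rintro ⟨S, hS⟩ ⟨h1, h2, h3⟩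
    apply Subtype.ext
    have h4 : dif (h • S) = D := by
      rw [← hc ⟨S, hS⟩ h1, h3]
    have h5 : ∞ ∈ h • S := by rw [← hp, hmem]; exact h1
    have h6 : (y : OnePoint F) ∈ h • S := by rw [hy, hmem]; exact h2
    change S = h⁻¹ • affM a y ha • B0 i
    rw [eq_inv_smul_iff]
    ext x
    induction x using OnePoint.rec with
    | infty => exact iff_of_true h5 hinf
    | coe x =>
      rw [mem_line_iff i _ (smul_circ i _ hS h) h5 y h6, mem_line_iff i _ hS1 hinf y hyS, h4, hdS]

end Outer

theorem outer_main (n : ℕ) (hn : n ≠ 0) : ExistsRDSQS (3 * 7 ^ n + 1) := by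
  classical
  haveI : Fact (Nat.Prime 7) := ⟨by norm_num⟩
  let F := GaloisField 7 n
  haveI : Fintype F := Fintype.ofFinite F
  have hcard : Fintype.card F = 7 ^ n := by
    rw [← Nat.card_eq_fintype_card]
    exact GaloisField.card 7 n hn
  let i : ZMod 7 →+* F := algebraMap (ZMod 7) F
  haveI : Finite (OnePoint F) := inferInstanceAs (Finite (Option F))
  haveI : Fintype (OnePoint F) := inferInstanceAs (Fintype (Option F))
  haveI : Finite {S : Set (OnePoint F) // IsCirc i S} := inferInstance
  haveI : Fintype {S : Set (OnePoint F) // IsCirc i S} := Fintype.ofFinite _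
  let circ : {S : Set (OnePoint F) // IsCirc i S} → Finset (OnePoint F) := fun S => S.1.toFinset
  have hm : ∀ S p, p ∈ circ S ↔ p ∈ S.1 := fun S p => Set.mem_toFinset
  have h8 : ∀ S, (circ S).card = 8 := by
    rintro ⟨S, g, rfl⟩
    simp only [circ]
    rw [← Set.ncard_eq_toFinset_card', Set.ncard_smul_set, B0, ← Set.image_univ,
      Set.ncard_image_of_injective _ (map_inj i), Set.ncard_univ]
    change Nat.card (Option (ZMod 7)) = 8
    simp
  have h3 : ∀ p q r : OnePoint F, p ≠ q → q ≠ r → p ≠ r →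
      ∃! A, p ∈ circ A ∧ q ∈ circ A ∧ r ∈ circ A := by
    intro p q r hpq hqr hpr
    simp only [hm]
    obtain ⟨g, h0, h1, h2⟩ := trans3 p q r hpq hqr hpr
    refine ⟨⟨_, g, rfl⟩, ⟨⟨_, inf_mem i, h0⟩, ⟨_, (coe_mem i 0).2 ⟨0, by simp⟩, h1⟩,
      ⟨_, (coe_mem i 1).2 ⟨1, by simp⟩, h2⟩⟩, ?_⟩
    rintro ⟨S, hS⟩ ⟨k0, k1, k2⟩
    exact Subtype.ext (circ_eq i S hS g (h0 ▸ k0) (h1 ▸ k1) (h2 ▸ k2))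
  have hr : ∀ p : OnePoint F, ∃ (ι : Type) (_ : Finite ι)
      (c : {S : Set (OnePoint F) // IsCirc i S} → ι), ∀ d q, q ≠ p →
      ∃! A, p ∈ circ A ∧ q ∈ circ A ∧ c A = d := by
    intro p
    obtain ⟨ι, c, ⟨f, hf⟩, h⟩ := circ_res i p
    simp only [hm]
    exact ⟨ι, Finite.of_injective f hf, c, h⟩
  have := composite (F := F) circ h8 h3 hr
  rwa [hcard] at this

theorem zero_main : ExistsRDSQS 4 := by
  have := conv_rds (α := Fin 4) (β := Unit) (fun _ => Finset.univ) (by simp)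
    (fun x y z _ _ _ => ⟨(), by simp, fun _ _ => rfl⟩)
    (fun x => ⟨Unit, inferInstance, fun _ => (), fun _ y _ => ⟨(), by simp, fun _ _ => rfl⟩⟩)
  simpa using this

/-- For every nonnegative integer n, there exists an RDSQS(3·7^n + 1). -/
theorem stmt_7 (n : ℕ) : ExistsRDSQS (3 * 7 ^ n + 1) := by
  rcases eq_or_ne n 0 with rfl | hn
  · exact zero_main
  · exact outer_main n hn
end

section
/- There exists an RDSQS*(28). -/
open Finset

def hTab : ℕ :=
  0x34b7c0991442923075549d7353f23259c06828c9bd19b9611b0b78225551864b3b8c02d00122c5a7c64d98e09b198742b7775700bb020d9e6aabc4b9111a850cdb246e2c720c4c9b051b6d24e6596a878a4c8c1d90a86013d67a013720d48d1825cc6b0c399396da0620536a403c05ea89efb2c2da71166a66408e74ab5c605b765222469e02e1320fa9d2045df5d130b00823ca58da15db31d5684a208162f48c2d1033bc2a8733ae462f48b4ea0a42423a9fb0e41aaaca475909b8dac36260945ab321451ef404b32ec55f60de82990e035a725ea24ce2a9035c3ba20a2ecf46044008864298e84a96c681f08ca74adaf8ceb60d6e08a86f2650b973c133907858a2a49ac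0ae13a4176669c8e1c26010737952d17ad40492d07e4b3a19d8bc4e200f616caba531003a4d4146182bad5448811834fde66d5dd805a986956c175d0f84c79de81126047696809d4ed6434ed9136553170be20c94d210d6050d168e1c2332e12d5726ec9904de9d5200785498388c3ac77dd85496705981158b740ccb6373170569b43de36acc467a001c24801aeeeccccfb2182a6151d34f24d420dc0a021dc50ca95858d36652f52da2d471b022e0b3ab156f2794f040e8cb65ca3a3530401e071b191b6498d66716eca4328b86885bbc0000000000000000000000000000000000000

def lineList : List ℕ :=
  [50, 268, 352, 548, 656, 2306, 3080, 5122, 6148, 8260, 8712, 9232, 10368, 32774, 32928, 34048,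
   36872, 57344, 65556, 65666, 86016, 98816, 131144, 131840, 135184, 139296, 149504, 262416,
   264256, 266368, 279552, 524480, 525344, 536576, 541184, 589832, 655362, 786436, 1048708,
   1049090, 1052736, 1065216, 1081360, 1114144, 1318912, 1574912, 2097232, 2099232, 2113664,
   2163712, 2260992, 2359298, 3145736, 4198432, 4202498, 4210752, 4260096, 4326400, 4456456,
   4718608, 6291968, 8388618, 8389636, 8392960, 8405024, 8423424, 8454208, 8519808, 8651264,
   10493952, 13631488, 16777256, 16777792, 16785664, 16793616, 16844800, 16908292, 17072128,
   17826816, 19398656, 20971648, 33554816, 33555520, 33559040, 33570824, 33628160, 33947648,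
   34111488, 35651588, 37750784, 41943056, 50331650, 67108930, 67109000, 67110400, 67110928,
   67125252, 67305472, 67371040, 69206272, 71335936, 76021760, 83890176, 101711872, 134217752,
   134218880, 134220288, 134234114, 134250560, 134545408, 134742272, 135397376, 136318976,
   138412036, 159383552, 167772192, 201334784]

def classTab : List (List ℕ) :=
  [[134234114, 16777792, 135184, 34048, 13631488, 2099232, 786436, 33628160, 67109000],
   [134234114, 139296, 33554816, 6291968, 67110928, 589832, 1052736, 8389636, 17072128],
   [134234114, 268, 8651264, 67305472, 34111488, 17826816, 10368, 2097232, 4198432],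
   [8260, 1049090, 16793616, 134545408, 2260992, 8392960, 37750784, 525344, 67109000],
   [8260, 149504, 167772192, 5122, 4260096, 656, 76021760, 3145736, 17072128],
   [8260, 134742272, 8388618, 2113664, 67110400, 33947648, 1081360, 16844800, 4198432],
   [131840, 50, 86016, 134250560, 101711872, 10493952, 3080, 20971648, 786436],
   [131840, 33570824, 134218880, 4202498, 8423424, 65556, 19398656, 67371040, 1052736],
   [131840, 159383552, 2359298, 67125252, 4718608, 33555520, 1114144, 36872, 10368],
   [41943056, 65666, 57344, 135397376, 525344, 69206272, 4456456, 6148, 16777792],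
   [41943056, 279552, 138412036, 2306, 3145736, 98816, 83890176, 524480, 139296],
   [41943056, 136318976, 67108930, 541184, 16844800, 4326400, 32928, 1318912, 268],
   [2163712, 32774, 1065216, 167772192, 20971648, 76021760, 264256, 8712, 135184],
   [2163712, 4210752, 134220288, 8388618, 67371040, 1081360, 536576, 16908292, 33554816],
   [2163712, 201334784, 655362, 16793616, 36872, 37750784, 1048708, 352, 8651264],
   [71335936, 1049090, 8405024, 134218880, 6148, 19398656, 131144, 262416, 33628160],
   [71335936, 149504, 134217752, 2359298, 524480, 1114144, 16785664, 33559040, 8389636],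
   [71335936, 134742272, 50331650, 86016, 1318912, 3080, 548, 8519808, 2097232],
   [1574912, 50, 2113664, 138412036, 8712, 83890176, 33947648, 8454208, 34048],
   [1574912, 33570824, 134545408, 67108930, 16908292, 32928, 8392960, 9232, 6291968],
   [1574912, 159383552, 5122, 57344, 352, 4456456, 656, 35651588, 67305472],
   [16777256, 65666, 67125252, 134220288, 262416, 536576, 33555520, 2260992, 13631488],
   [16777256, 279552, 134250560, 655362, 33559040, 1048708, 10493952, 4260096, 67110928],
   [16777256, 136318976, 4202498, 1065216, 8519808, 264256, 65556, 67110400, 34111488],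
   [266368, 32774, 541184, 134217752, 8454208, 16785664, 4326400, 101711872, 2099232],
   [266368, 4210752, 135397376, 50331650, 9232, 548, 69206272, 8423424, 589832],
   [266368, 201334784, 2306, 8405024, 35651588, 131144, 98816, 4718608, 17826816]]

def hh (u v : ℕ) : ℕ := (hTab >>> (5 * (28 * u + v))) % 32

/-- The fourth point of the block through `a, b, c`. -/
def ff (a b c : ℕ) : ℕ := (a + hh ((b + 28 - a) % 28) ((c + 28 - a) % 28)) % 28

lemma ff_lt (a b c : ℕ) : ff a b c < 28 := Nat.mod_lt _ (by norm_num)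

def ffProp (a b c : ℕ) : Prop :=
  (a = b ∨ a = c ∨ b = c) ∨
    (ff a b c ≠ a ∧ ff a b c ≠ b ∧ ff a b c ≠ c) ∧ ff b a c = ff a b c ∧
      ff a c b = ff a b c ∧ ff a b (ff a b c) = c

instance (a b c : ℕ) : Decidable (ffProp a b c) := by
  unfold ffProp
  infer_instance

set_option maxRecDepth 100000 in
lemma ff_check0 : ∀ a < 28, ∀ b < 28, ∀ c < 28, ffProp a b c := by
  decide +kernel

lemma ff_check (a : ℕ) (ha : a < 28) (b : ℕ) (hb : b < 28) (hab : a ≠ b) (c : ℕ) (hc : c < 28)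
    (hac : a ≠ c) (hbc : b ≠ c) :
    (ff a b c ≠ a ∧ ff a b c ≠ b ∧ ff a b c ≠ c) ∧ ff b a c = ff a b c ∧
      ff a c b = ff a b c ∧ ff a b (ff a b c) = c :=
  (ff_check0 a ha b hb c hc).resolve_left
    (fun h => h.elim hab (fun h => h.elim hac hbc))

def XX : Finset ℕ := range 28

def IsBlk (s : Finset ℕ) : Prop :=
  ∃ a b c, a < 28 ∧ b < 28 ∧ c < 28 ∧ a ≠ b ∧ a ≠ c ∧ b ≠ c ∧ s = {a, b, c, ff a b c}

open Classical in
noncomputable def BB : Finset (Finset ℕ) := XX.powerset.filter IsBlk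

lemma BB_sub {s : Finset ℕ} (h : s ∈ BB) : s ⊆ XX := by
  classical
  exact mem_powerset.1 (mem_filter.1 h).1

lemma mem_BB (s : Finset ℕ) : s ∈ BB ↔ IsBlk s := by
  classical
  unfold BB
  rw [mem_filter, mem_powerset]
  refine ⟨fun h => h.2, fun h => ⟨?_, h⟩⟩
  obtain ⟨a, b, c, ha, hb, hc, -, -, -, rfl⟩ := h
  intro x hx
  simp only [mem_insert, mem_singleton] at hx
  have := ff_lt a b c
  simp only [XX, mem_range]
  omega

set_option linter.unusedSimpArgs false in
set_option maxHeartbeats 2000000 in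
lemma blk_eq {s : Finset ℕ} (hs : IsBlk s) {x y z : ℕ} (hx : x ∈ s) (hy : y ∈ s) (hz : z ∈ s)
    (hxy : x ≠ y) (hxz : x ≠ z) (hyz : y ≠ z) : s = {x, y, z, ff x y z} := by
  obtain ⟨a, b, c, ha, hb, hc, hab, hac, hbc, rfl⟩ := hs
  obtain ⟨d, hd⟩ : ∃ d, d = ff a b c := ⟨_, rfl⟩
  have hd28 : d < 28 := hd ▸ ff_lt a b c
  have S1 : ∀ a b c, a < 28 → b < 28 → c < 28 → a ≠ b → a ≠ c → b ≠ c →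
      ff b a c = ff a b c := fun a b c ha hb hc h1 h2 h3 => (ff_check a ha b hb h1 c hc h2 h3).2.1
  have S2 : ∀ a b c, a < 28 → b < 28 → c < 28 → a ≠ b → a ≠ c → b ≠ c →
      ff a c b = ff a b c := fun a b c ha hb hc h1 h2 h3 =>
        (ff_check a ha b hb h1 c hc h2 h3).2.2.1
  have S3 : ∀ a b c, a < 28 → b < 28 → c < 28 → a ≠ b → a ≠ c → b ≠ c →
      ff a b (ff a b c) = c := fun a b c ha hb hc h1 h2 h3 =>
        (ff_check a ha b hb h1 c hc h2 h3).2.2.2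
  obtain ⟨hda, hdb, hdc⟩ := (ff_check a ha b hb hab c hc hac hbc).1
  rw [← hd] at hda hdb hdc hx hy hz ⊢
  -- all permutations
  have P : ∀ a b c d, a < 28 → b < 28 → c < 28 → a ≠ b → a ≠ c → b ≠ c → ff a b c = d →
      ff b a c = d ∧ ff a c b = d ∧ ff b c a = d ∧ ff c a b = d ∧ ff c b a = d := by
    intro a b c d ha hb hc h1 h2 h3 h
    have e1 := S1 a b c ha hb hc h1 h2 h3
    have e2 := S2 a b c ha hb hc h1 h2 h3
    have e3 := S2 b a c hb ha hc h1.symm h3 h2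
    have e4 := S1 a c b ha hc hb h2 h1 h3.symm
    have e5 := S2 c a b hc ha hb h2.symm h3.symm h1
    refine ⟨?_, ?_, ?_, ?_, ?_⟩ <;> omega
  have Q1 := P a b c d ha hb hc hab hac hbc hd.symm
  have r2 : ff a b d = c := by rw [hd]; exact S3 a b c ha hb hc hab hac hbc
  have Q2 := P a b d c ha hb hd28 hab hda.symm hdb.symm r2
  have r3 : ff a c d = b := by
    have := S3 a c b ha hc hb hac hab hbc.symm
    rwa [Q1.2.1] at this
  have Q3 := P a c d b ha hc hd28 hac hda.symm hdc.symm r3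
  have r4 : ff b c d = a := by
    have := S3 b c a hb hc ha hbc hab.symm hac.symm
    rwa [Q1.2.2.1] at this
  have Q4 := P b c d a hb hc hd28 hbc hdb.symm hdc.symm r4
  obtain ⟨q11, q12, q13, q14, q15⟩ := Q1
  obtain ⟨q21, q22, q23, q24, q25⟩ := Q2
  obtain ⟨q31, q32, q33, q34, q35⟩ := Q3
  obtain ⟨q41, q42, q43, q44, q45⟩ := Q4
  have q10 := hd.symm
  simp only [mem_insert, mem_singleton] at hx hy hz
  rcases hx with hx | hx | hx | hx <;> rcases hy with hy | hy | hy | hy <;>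
    first
    | exact absurd (hx.trans hy.symm) hxy
    | rcases hz with hz | hz | hz | hz <;>
      first
      | exact absurd (hx.trans hz.symm) hxz
      | exact absurd (hy.trans hz.symm) hyz
      | (rw [hx, hy, hz]
         simp only [q10, q11, q12, q13, q14, q15, r2, q21, q22, q23, q24, q25,
           r3, q31, q32, q33, q34, q35, r4, q41, q42, q43, q44, q45]
         try
           ext w
           simp only [mem_insert, mem_singleton]
           clear * -
           tauto)

lemma steiner : IsSteiner 3 4 28 XX BB := by
  refine ⟨by simp [XX], ?_, ?_⟩
  · intro b hb
    refine ⟨BB_sub hb, ?_⟩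
    obtain ⟨a, b, c, ha, hb', hc, hab, hac, hbc, rfl⟩ := (mem_BB _).1 hb
    obtain ⟨hda, hdb, hdc⟩ := (ff_check a ha b hb' hab c hc hac hbc).1
    rw [card_insert_of_notMem, card_insert_of_notMem, card_pair hdc.symm]
    · simp only [mem_insert, mem_singleton]
      exact fun h => h.elim hbc (fun h => hdb h.symm)
    · simp only [mem_insert, mem_singleton]
      exact fun h => h.elim hab (fun h => h.elim hac (fun h => hda h.symm))
  · intro T hT hT3
    obtain ⟨a, b, c, hab, hac, hbc, rfl⟩ := card_eq_three.1 hT3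
    have ha : a < 28 := mem_range.1 (hT (by simp))
    have hb : b < 28 := mem_range.1 (hT (by simp))
    have hc : c < 28 := mem_range.1 (hT (by simp))
    refine ⟨{a, b, c, ff a b c}, ⟨(mem_BB _).2 ⟨a, b, c, ha, hb, hc, hab, hac, hbc, rfl⟩, ?_⟩, ?_⟩
    · intro w
      simp only [mem_insert, mem_singleton]
      tauto
    · rintro s ⟨hs, hTs⟩
      exact blk_eq ((mem_BB _).1 hs) (hTs (by simp)) (hTs (by simp)) (hTs (by simp)) hab hac hbc

/-- The cyclic automorphism. -/
def sg : Equiv.Perm ℕ where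
  toFun x := if x < 28 then (x + 1) % 28 else x
  invFun x := if x < 28 then (x + 27) % 28 else x
  left_inv x := by
    dsimp only
    split_ifs <;> omega
  right_inv x := by
    dsimp only
    split_ifs <;> omega

lemma sg_lt {x : ℕ} (h : x < 28) : sg x = (x + 1) % 28 := by
  simp [sg, h]

lemma sg_lt_iff {x : ℕ} : sg x < 28 ↔ x < 28 := by
  show (if x < 28 then (x + 1) % 28 else x) < 28 ↔ _
  split_ifs <;> omega

lemma sg_symm_lt {x : ℕ} (h : x < 28) : sg.symm x < 28 := by
  rw [← sg_lt_iff]; simpa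

lemma sg_ff {a b c : ℕ} (ha : a < 28) (hb : b < 28) (hc : c < 28) :
    ff (sg a) (sg b) (sg c) = sg (ff a b c) := by
  rw [sg_lt ha, sg_lt hb, sg_lt hc, sg_lt (ff_lt a b c)]
  unfold ff
  have e1 : ((b + 1) % 28 + 28 - (a + 1) % 28) % 28 = (b + 28 - a) % 28 := by omega
  have e2 : ((c + 1) % 28 + 28 - (a + 1) % 28) % 28 = (c + 28 - a) % 28 := by omega
  rw [e1, e2]
  omega

abbrev EE : Finset ℕ ↪ Finset ℕ := (mapEmbedding sg.toEmbedding).toEmbedding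

lemma EE_apply (s : Finset ℕ) : EE s = s.map sg.toEmbedding := rfl

lemma XX_map : XX.map sg.toEmbedding = XX := by
  ext x
  rw [mem_map_equiv]
  simp only [XX, mem_range]
  rw [← sg_lt_iff]
  simp

lemma isBlk_map {s : Finset ℕ} (h : IsBlk s) : IsBlk (s.map sg.toEmbedding) := by
  obtain ⟨a, b, c, ha, hb, hc, hab, hac, hbc, rfl⟩ := h
  refine ⟨sg a, sg b, sg c, sg_lt_iff.2 ha, sg_lt_iff.2 hb, sg_lt_iff.2 hc,
    sg.injective.ne hab, sg.injective.ne hac, sg.injective.ne hbc, ?_⟩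
  rw [sg_ff ha hb hc]
  simp [map_insert]

lemma BB_map : BB.map EE = BB := by
  apply eq_of_subset_of_card_le
  · intro s hs
    obtain ⟨t, ht, rfl⟩ := mem_map.1 hs
    exact (mem_BB _).2 (isBlk_map ((mem_BB _).1 ht))
  · rw [card_map]

lemma derived_map (B : Finset (Finset ℕ)) (x : ℕ) :
    derivedBlocks (B.map EE) (sg x) = (derivedBlocks B x).map EE := by
  ext s
  simp only [derivedBlocks, mem_image, mem_filter, mem_map, EE_apply]
  constructor
  · rintro ⟨_, ⟨⟨b, hb, rfl⟩, hx⟩, rfl⟩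
    refine ⟨b.erase x, ⟨b, ⟨hb, ?_⟩, rfl⟩, ?_⟩
    · simpa using hx
    · rw [map_erase]; rfl
  · rintro ⟨_, ⟨b, ⟨hb, hx⟩, rfl⟩, rfl⟩
    refine ⟨b.map sg.toEmbedding, ⟨⟨b, hb, rfl⟩, ?_⟩, ?_⟩
    · simpa using hx
    · rw [map_erase]; rfl

lemma parallel_map {Y : Finset ℕ} {P : Finset (Finset ℕ)} (h : IsParallelClass Y P) :
    IsParallelClass (Y.map sg.toEmbedding) (P.map EE) := by
  constructor
  · intro s hs
    obtain ⟨t, ht, rfl⟩ := mem_map.1 hs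
    exact map_subset_map.2 (h.1 t ht)
  · intro y hy
    obtain ⟨z, hz, rfl⟩ := mem_map.1 hy
    obtain ⟨b, ⟨hb, hzb⟩, hu⟩ := h.2 z hz
    refine ⟨EE b, ⟨mem_map_of_mem _ hb, mem_map_of_mem _ hzb⟩, ?_⟩
    rintro s ⟨hs, hzs⟩
    obtain ⟨t, ht, rfl⟩ := mem_map.1 hs
    rw [hu t ⟨ht, (mem_map' _).1 hzs⟩]

def Good (v : ℕ) (X : Finset ℕ) (B : Finset (Finset ℕ)) (x : ℕ) : Prop :=
  ∃ (P' : Finset (Finset ℕ)) (Bk : Fin ((v - 1) / 3) → Finset ℕ)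
    (P : Fin ((v - 1) / 3) → Fin 3 → Finset (Finset ℕ)),
    P' ⊆ derivedBlocks B x ∧
    IsParallelClass (X.erase x) P' ∧
    (∀ k, Bk k ∈ P') ∧
    (∀ b ∈ P', ∃ k, Bk k = b) ∧
    Function.Injective Bk ∧
    (∀ k l, IsParallelClass (X.erase x) (P k l)) ∧
    ((∑ k, ∑ l, (P k l).val) =
        3 • P'.val + 2 • ((derivedBlocks B x) \ P').val) ∧
    ∀ k l, Bk k ∈ P k l

lemma good_step {x : ℕ} (h : Good 28 XX BB x) : Good 28 XX BB (sg x) := by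
  obtain ⟨P', Bk, P, h1, h2, h3, h4, h5, h6, h7, h8⟩ := h
  have hX : XX.erase (sg x) = (XX.erase x).map sg.toEmbedding := by
    rw [map_erase, XX_map]; rfl
  have hD : derivedBlocks BB (sg x) = (derivedBlocks BB x).map EE := by
    rw [← derived_map, BB_map]
  refine ⟨P'.map EE, fun k => EE (Bk k), fun k l => (P k l).map EE, ?_, ?_, ?_, ?_, ?_, ?_, ?_, ?_⟩
  · rw [hD]; exact map_subset_map.2 h1
  · rw [hX]; exact parallel_map h2
  · exact fun k => mem_map_of_mem _ (h3 k)
  · intro b hb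
    obtain ⟨t, ht, rfl⟩ := mem_map.1 hb
    obtain ⟨k, rfl⟩ := h4 t ht
    exact ⟨k, rfl⟩
  · exact EE.injective.comp h5
  · intro k l
    rw [hX]; exact parallel_map (h6 k l)
  · rw [hD, ← Finset.map_sdiff]
    have := congrArg (Multiset.mapAddMonoidHom EE) h7
    simpa only [map_sum, map_add, map_nsmul, Multiset.coe_mapAddMonoidHom, ← map_val] using this
  · exact fun k l => mem_map_of_mem _ (h8 k l)

abbrev ee : ℕ ↪ Finset ℕ := equivBitIndices.toEmbedding

lemma mem_ee (n x : ℕ) : x ∈ ee n ↔ n.testBit x = true := by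
  simp [ee]

lemma ee_three {x y z : ℕ} (hxy : x ≠ y) (hxz : x ≠ z) (hyz : y ≠ z) :
    ee (2 ^ x + 2 ^ y + 2 ^ z) = {x, y, z} := by
  show equivBitIndices _ = _
  rw [← Equiv.eq_symm_apply]
  simp only [equivBitIndices_symm_apply]
  rw [sum_insert (by simp [hxy, hxz]), sum_pair hyz, add_assoc]

set_option maxRecDepth 100000 in
lemma line_check0 : ∀ y < 28, ∀ z < 28, (y = 0 ∨ z = 0 ∨ y = z) ∨
    2 ^ y + 2 ^ z + 2 ^ (ff 0 y z) ∈ lineList := by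
  decide +kernel

lemma line_check1 (y : ℕ) (hy : y < 28) (z : ℕ) (hz : z < 28) (hy0 : y ≠ 0) (hz0 : z ≠ 0)
    (hyz : y ≠ z) : 2 ^ y + 2 ^ z + 2 ^ (ff 0 y z) ∈ lineList :=
  (line_check0 y hy z hz).resolve_left (fun h => h.elim hy0 (fun h => h.elim hz0 hyz))

set_option maxRecDepth 100000 in
lemma line_check2 : ∀ n ∈ lineList, ∃ y < 28, ∃ z < 28, y ≠ 0 ∧ z ≠ 0 ∧ y ≠ z ∧
    n = 2 ^ y + 2 ^ z + 2 ^ (ff 0 y z) := by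
  decide +kernel

lemma derived_zero : derivedBlocks BB 0 = lineList.toFinset.map ee := by
  ext s
  simp only [derivedBlocks, mem_image, mem_filter, mem_map, List.mem_toFinset]
  have key : ∀ y < 28, ∀ z < 28, y ≠ 0 → z ≠ 0 → y ≠ z →
      ({0, y, z, ff 0 y z} : Finset ℕ).erase 0 = ee (2 ^ y + 2 ^ z + 2 ^ (ff 0 y z)) := by
    intro y hy z hz hy0 hz0 hyz
    obtain ⟨h0, h1, h2⟩ := (ff_check 0 (by norm_num) y hy hy0.symm z hz hz0.symm hyz).1
    rw [ee_three hyz h1.symm h2.symm, erase_insert]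
    simp only [mem_insert, mem_singleton]
    omega
  constructor
  · rintro ⟨b, ⟨hb, h0⟩, rfl⟩
    have hblk := (mem_BB _).1 hb
    have hlt : ∀ x ∈ b, x < 28 := fun x hx =>
      mem_range.1 (BB_sub hb hx)
    obtain ⟨y, z, hy, hz, hy0, hz0, hyz⟩ : ∃ y z, y ∈ b ∧ z ∈ b ∧ y ≠ 0 ∧ z ≠ 0 ∧ y ≠ z := by
      have hc := (steiner.2.1 b hb).2
      have hc2 : 1 < (b.erase 0).card := by rw [card_erase_of_mem h0]; omega
      obtain ⟨y, hy, z, hz, hyz⟩ := one_lt_card.1 hc2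
      rw [mem_erase] at hy hz
      exact ⟨y, z, hy.2, hz.2, hy.1, hz.1, hyz⟩
    refine ⟨_, line_check1 y (hlt y hy) z (hlt z hz) hy0 hz0 hyz, ?_⟩
    rw [← key y (hlt y hy) z (hlt z hz) hy0 hz0 hyz,
      ← blk_eq hblk h0 hy hz hy0.symm hz0.symm hyz]
  · rintro ⟨n, hn, rfl⟩
    obtain ⟨y, hy, z, hz, hy0, hz0, hyz, rfl⟩ := line_check2 n hn
    exact ⟨_, ⟨(mem_BB _).2 ⟨0, y, z, by norm_num, hy, hz, hy0.symm, hz0.symm, hyz, rfl⟩,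
      by simp⟩, key y hy z hz hy0 hz0 hyz⟩

def isPar (L : List ℕ) : Bool :=
  L.all (fun n => decide (n < 2 ^ 28) && !n.testBit 0) &&
  (List.range 28).all (fun y => y == 0 ||
    ((L.filter fun n => n.testBit y).length == 1))

lemma isPar_spec {L : List ℕ} (h : isPar L = true) :
    IsParallelClass (XX.erase 0) (L.toFinset.map ee) := by
  simp only [isPar, Bool.and_eq_true, List.all_eq_true, decide_eq_true_eq, List.mem_range,
    Bool.or_eq_true, beq_iff_eq, Bool.not_eq_true'] at h
  obtain ⟨h1, h2⟩ := h
  constructor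
  · intro b hb
    obtain ⟨n, hn, rfl⟩ := mem_map.1 hb
    obtain ⟨hlt, h0⟩ := h1 n (List.mem_toFinset.1 hn)
    intro x hx
    rw [mem_ee] at hx
    rw [mem_erase]
    constructor
    · rintro rfl
      simp [h0] at hx
    · rw [XX, mem_range]
      by_contra hx28
      have : n < 2 ^ x := hlt.trans_le (Nat.pow_le_pow_right (by norm_num) (by omega))
      rw [Nat.testBit_lt_two_pow this] at hx
      exact absurd hx (by simp)
  · intro y hy
    rw [mem_erase, XX, mem_range] at hy
    have h := (h2 y hy.2).resolve_left hy.1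
    obtain ⟨n, hn⟩ := List.length_eq_one_iff.1 h
    have hm : ∀ m, (m ∈ L ∧ m.testBit y = true) ↔ m = n := by
      intro m
      have : m ∈ L.filter (fun n => n.testBit y) ↔ m = n := by rw [hn]; simp
      rwa [List.mem_filter] at this
    have hnn := (hm n).2 rfl
    refine ⟨ee n, ⟨mem_map_of_mem _ (List.mem_toFinset.2 hnn.1), (mem_ee _ _).2 hnn.2⟩, ?_⟩
    rintro s ⟨hs, hys⟩
    obtain ⟨m, hmL, rfl⟩ := mem_map.1 hs
    rw [(hm m).1 ⟨List.mem_toFinset.1 hmL, (mem_ee _ _).1 hys⟩]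

def cls (k : Fin 9) (l : Fin 3) : List ℕ := classTab.getD (3 * k.val + l.val) []

def bk (k : Fin 9) : ℕ := (cls k 0).headD 0

def ppList : List ℕ := (List.finRange 9).map bk

set_option maxRecDepth 100000 in
lemma chk_sub : ∀ n ∈ ppList, n ∈ lineList := by decide +kernel

lemma chk_par0 : isPar ppList = true := by decide +kernel

lemma chk_par : ∀ k l, isPar (cls k l) = true := by decide +kernel

lemma chk_inj : ∀ k k' : Fin 9, bk k = bk k' → k = k' := by decide +kernel

lemma chk_mem : ∀ k l, bk k ∈ cls k l := by decide +kernel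

set_option maxRecDepth 100000 in
lemma chk_sum : (∑ k, ∑ l, (cls k l).toFinset.val) =
    3 • ppList.toFinset.val + 2 • (lineList.toFinset \ ppList.toFinset).val := by
  decide +kernel

lemma good_zero : Good 28 XX BB 0 := by
  refine ⟨ppList.toFinset.map ee, fun k => ee (bk k), fun k l => (cls k l).toFinset.map ee,
    ?_, isPar_spec chk_par0, ?_, ?_, ?_, fun k l => isPar_spec (chk_par k l), ?_, ?_⟩
  · rw [derived_zero, map_subset_map]
    intro n hn
    exact List.mem_toFinset.2 (chk_sub n (List.mem_toFinset.1 hn))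
  · intro k
    exact mem_map_of_mem _ (List.mem_toFinset.2 (List.mem_map_of_mem (List.mem_finRange k)))
  · intro b hb
    obtain ⟨n, hn, rfl⟩ := mem_map.1 hb
    obtain ⟨k, -, rfl⟩ := List.mem_map.1 (List.mem_toFinset.1 hn)
    exact ⟨k, rfl⟩
  · exact fun k k' h => chk_inj k k' (ee.injective h)
  · rw [derived_zero, ← Finset.map_sdiff]
    have := congrArg (Multiset.mapAddMonoidHom ee) chk_sum
    simpa only [map_sum, map_add, map_nsmul, Multiset.coe_mapAddMonoidHom, ← map_val] using this
  · exact fun k l => mem_map_of_mem _ (List.mem_toFinset.2 (chk_mem k l))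

lemma good_all : ∀ x < 28, Good 28 XX BB x := by
  intro x
  induction x with
  | zero => exact fun _ => good_zero
  | succ n ih =>
    intro h
    have := good_step (ih (by omega))
    rwa [sg_lt (by omega), Nat.mod_eq_of_lt h] at this

/-- There exists an RDSQS*(28). -/
theorem stmt_9 : ∃ X B, IsRDSQSstar 28 X B :=
  ⟨XX, BB, steiner, by norm_num, fun x hx => good_all x (mem_range.1 hx)⟩
end

section
/- There exists a 2-resolvable SQS(16), namely a Steiner quadruple system SQS(16) whose block collection can be partitioned into seven subcollections, each of which forms a resolvable S(2, 4, 16) on the same 16-element point set. -/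
open Finset

def dat : List (List (List (List ℕ))) := [
  [[[0, 1, 2, 3], [4, 5, 6, 7], [8, 9, 10, 11], [12, 13, 14, 15]],
   [[0, 4, 8, 12], [1, 5, 9, 13], [2, 6, 10, 14], [3, 7, 11, 15]],
   [[0, 5, 10, 15], [1, 4, 11, 14], [2, 7, 8, 13], [3, 6, 9, 12]],
   [[0, 6, 11, 13], [1, 7, 10, 12], [2, 4, 9, 15], [3, 5, 8, 14]],
   [[0, 7, 9, 14], [1, 6, 8, 15], [2, 5, 11, 12], [3, 4, 10, 13]]],
  [[[0, 1, 4, 5], [2, 3, 6, 7], [8, 9, 12, 13], [10, 11, 14, 15]],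
   [[0, 2, 8, 10], [1, 3, 9, 11], [4, 6, 12, 14], [5, 7, 13, 15]],
   [[0, 3, 13, 14], [1, 2, 12, 15], [4, 7, 9, 10], [5, 6, 8, 11]],
   [[0, 6, 9, 15], [1, 7, 8, 14], [2, 4, 11, 13], [3, 5, 10, 12]],
   [[0, 7, 11, 12], [1, 6, 10, 13], [2, 5, 9, 14], [3, 4, 8, 15]]],
  [[[0, 1, 6, 7], [2, 3, 4, 5], [8, 9, 14, 15], [10, 11, 12, 13]],
   [[0, 2, 9, 11], [1, 3, 8, 10], [4, 6, 13, 15], [5, 7, 12, 14]],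
   [[0, 3, 12, 15], [1, 2, 13, 14], [4, 7, 8, 11], [5, 6, 9, 10]],
   [[0, 4, 10, 14], [1, 5, 11, 15], [2, 6, 8, 12], [3, 7, 9, 13]],
   [[0, 5, 8, 13], [1, 4, 9, 12], [2, 7, 10, 15], [3, 6, 11, 14]]],
  [[[0, 1, 8, 9], [2, 3, 10, 11], [4, 5, 12, 13], [6, 7, 14, 15]],
   [[0, 2, 12, 14], [1, 3, 13, 15], [4, 6, 8, 10], [5, 7, 9, 11]],
   [[0, 3, 5, 6], [1, 2, 4, 7], [8, 11, 13, 14], [9, 10, 12, 15]],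
   [[0, 4, 11, 15], [1, 5, 10, 14], [2, 6, 9, 13], [3, 7, 8, 12]],
   [[0, 7, 10, 13], [1, 6, 11, 12], [2, 5, 8, 15], [3, 4, 9, 14]]],
  [[[0, 1, 10, 11], [2, 3, 8, 9], [4, 5, 14, 15], [6, 7, 12, 13]],
   [[0, 2, 13, 15], [1, 3, 12, 14], [4, 6, 9, 11], [5, 7, 8, 10]],
   [[0, 3, 4, 7], [1, 2, 5, 6], [8, 11, 12, 15], [9, 10, 13, 14]],
   [[0, 5, 9, 12], [1, 4, 8, 13], [2, 7, 11, 14], [3, 6, 10, 15]],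
   [[0, 6, 8, 14], [1, 7, 9, 15], [2, 4, 10, 12], [3, 5, 11, 13]]],
  [[[0, 1, 12, 13], [2, 3, 14, 15], [4, 5, 8, 9], [6, 7, 10, 11]],
   [[0, 2, 4, 6], [1, 3, 5, 7], [8, 10, 12, 14], [9, 11, 13, 15]],
   [[0, 3, 9, 10], [1, 2, 8, 11], [4, 7, 13, 14], [5, 6, 12, 15]],
   [[0, 5, 11, 14], [1, 4, 10, 15], [2, 7, 9, 12], [3, 6, 8, 13]],
   [[0, 7, 8, 15], [1, 6, 9, 14], [2, 5, 10, 13], [3, 4, 11, 12]]],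
  [[[0, 1, 14, 15], [2, 3, 12, 13], [4, 5, 10, 11], [6, 7, 8, 9]],
   [[0, 2, 5, 7], [1, 3, 4, 6], [8, 10, 13, 15], [9, 11, 12, 14]],
   [[0, 3, 8, 11], [1, 2, 9, 10], [4, 7, 12, 15], [5, 6, 13, 14]],
   [[0, 4, 9, 13], [1, 5, 8, 12], [2, 6, 11, 15], [3, 7, 10, 14]],
   [[0, 6, 10, 12], [1, 7, 11, 13], [2, 4, 8, 14], [3, 5, 9, 15]]]]

def cell (i : Fin 7) (j : Fin 5) : List (List ℕ) := (dat.getD i []).getD j []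

def flatC (i : Fin 7) : List (List ℕ) := (dat.getD i []).flatten

def flatB : List (List ℕ) := dat.flatten.flatten

def toF (L : List (List ℕ)) : Finset (Finset ℕ) := (L.map List.toFinset).toFinset

theorem mem_toF {L : List (List ℕ)} {b : Finset ℕ} :
    b ∈ toF L ↔ ∃ l ∈ L, l.toFinset = b := by
  simp [toF]

theorem flatC_cell : ∀ i, ∀ l ∈ flatC i, ∃ j, l ∈ cell i j := by decide +kernel

theorem cell_flatC : ∀ i j, ∀ l ∈ cell i j, l ∈ flatC i := by decide +kernel

theorem flatB_flatC : ∀ l ∈ flatB, ∃ i, l ∈ flatC i := by decide +kernel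

theorem flatC_flatB : ∀ i, ∀ l ∈ flatC i, l ∈ flatB := by decide +kernel

theorem cell_uniq : ∀ i j, ∀ l ∈ cell i j, ∀ j', l ∈ cell i j' → j = j' := by decide +kernel

theorem flatC_uniq : ∀ i, ∀ l ∈ flatC i, ∀ i', l ∈ flatC i' → i = i' := by decide +kernel

theorem size_ok : ∀ l ∈ flatB, (∀ y ∈ l, y < 16) ∧ l.length = 4 ∧ l.Nodup := by decide +kernel

theorem par_ok : ∀ i j, ∀ y < 16, ((cell i j).filter fun l => l.elem y).length = 1 := by
  decide +kernel

theorem pair_ok : ∀ i, ∀ x < 16, ∀ y < 16, x ≠ y →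
    ((flatC i).filter fun l => l.elem x && l.elem y).length = 1 := by
  decide +kernel

theorem triple_ord : ∀ x < 16, ∀ y < x, ∀ z < y,
    (flatB.filter fun l => l.elem x && (l.elem y && l.elem z)).length = 1 := by
  decide +kernel

theorem triple_ok (x : ℕ) (hx : x < 16) (y : ℕ) (hy : y < 16) (z : ℕ) (hz : z < 16)
    (h : x ≠ y ∧ x ≠ z ∧ y ≠ z) :
    (flatB.filter fun l => l.elem x && (l.elem y && l.elem z)).length = 1 := by
  obtain ⟨h1, h2, h3⟩ := h
  have c1 : ∀ a b c : ℕ, (fun l : List ℕ => l.elem a && (l.elem b && l.elem c)) =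
      fun l => l.elem b && (l.elem a && l.elem c) := by
    intro a b c; funext l; exact Bool.and_left_comm _ _ _
  have c2 : ∀ a b c : ℕ, (fun l : List ℕ => l.elem a && (l.elem b && l.elem c)) =
      fun l => l.elem a && (l.elem c && l.elem b) := by
    intro a b c; funext l; rw [Bool.and_comm (l.elem b)]
  rcases lt_or_gt_of_ne h1 with h1 | h1 <;> rcases lt_or_gt_of_ne h2 with h2 | h2 <;>
    rcases lt_or_gt_of_ne h3 with h3 | h3
  · rw [c2, c1, c2, c1, c2, c1, c2, c1, c2]
    exact triple_ord z hz y h3 x h1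
  · rw [c1, c2]
    exact triple_ord y hy z h3 x h2
  · omega
  · rw [c1]
    exact triple_ord y hy x h1 z h2
  · rw [c2, c1]
    exact triple_ord z hz x h2 y h1
  · omega
  · rw [c2]
    exact triple_ord x hx z h2 y h3
  · exact triple_ord x hx y h1 z h3

theorem sort_ok : ∀ l ∈ flatB, l.Pairwise (· ≤ ·) := by decide +kernel

theorem uniq_of (L : List (List ℕ)) (p : List ℕ → Bool) (q : Finset ℕ → Prop)
    (hpq : ∀ l, p l = true ↔ q l.toFinset) (h : (L.filter p).length = 1) :
    ∃! b, b ∈ toF L ∧ q b := by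
  obtain ⟨a, ha⟩ := List.length_eq_one_iff.1 h
  have key : ∀ l, (l ∈ L ∧ p l = true) ↔ l = a := by
    intro l
    rw [← List.mem_filter, ha, List.mem_singleton]
  obtain ⟨h1, h2⟩ := (key a).2 rfl
  refine ⟨a.toFinset, ⟨mem_toF.2 ⟨a, h1, rfl⟩, (hpq a).1 h2⟩, ?_⟩
  rintro b ⟨hb, hq⟩
  obtain ⟨l, hl, rfl⟩ := mem_toF.1 hb
  rw [(key l).1 ⟨hl, (hpq l).2 hq⟩]

theorem inj_ok {l l' : List ℕ} (h : l ∈ flatB) (h' : l' ∈ flatB)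
    (e : l.toFinset = l'.toFinset) : l = l' := by
  have hp : l.Perm l' := by
    refine (List.perm_ext_iff_of_nodup (size_ok l h).2.2 (size_ok l' h').2.2).2 fun a => ?_
    rw [← List.mem_toFinset, e, List.mem_toFinset]
  exact hp.eq_of_pairwise (fun a b _ _ h1 h2 => le_antisymm h1 h2) (sort_ok l h) (sort_ok l' h')

theorem blk_ok {L : List (List ℕ)} (hL : ∀ l ∈ L, l ∈ flatB) :
    ∀ b ∈ toF L, b ⊆ range 16 ∧ b.card = 4 := by
  intro b hb
  obtain ⟨l, hl, rfl⟩ := mem_toF.1 hb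
  obtain ⟨h1, h2, h3⟩ := size_ok l (hL l hl)
  refine ⟨fun y hy => ?_, ?_⟩
  · exact Finset.mem_range.2 (h1 y (List.mem_toFinset.1 hy))
  · rw [List.toFinset_card_of_nodup h3, h2]

theorem toF_mono {L M : List (List ℕ)} (h : ∀ l ∈ L, l ∈ M) : toF L ⊆ toF M := by
  intro b hb
  obtain ⟨l, hl, rfl⟩ := mem_toF.1 hb
  exact mem_toF.2 ⟨l, h l hl, rfl⟩

/-- There exists a 2-resolvable SQS(16): an SQS(16) whose block collection can
be partitioned into seven subcollections, each a resolvable S(2, 4, 16). -/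
theorem stmt_10 :
    ∃ (X : Finset ℕ) (B : Finset (Finset ℕ)) (C : Fin 7 → Finset (Finset ℕ)),
      IsSteiner 3 4 16 X B ∧
      (∀ i, C i ⊆ B) ∧
      (∀ b ∈ B, ∃! i, b ∈ C i) ∧
      ∀ i, IsSteiner 2 4 16 X (C i) ∧ Resolvable X (C i) := by
  refine ⟨range 16, toF flatB, fun i => toF (flatC i), ⟨by simp, blk_ok fun _ h => h, ?_⟩,
    fun i => toF_mono (flatC_flatB i), ?_, fun i => ⟨⟨by simp, blk_ok (flatC_flatB i), ?_⟩, ?_⟩⟩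
  · intro T hT hc
    obtain ⟨x, y, z, hxy, hxz, hyz, rfl⟩ := Finset.card_eq_three.1 hc
    simp only [Finset.insert_subset_iff, Finset.singleton_subset_iff, Finset.mem_range] at hT
    refine uniq_of _ _ _ (fun l => ?_) (triple_ok x hT.1 y hT.2.1 z hT.2.2 ⟨hxy, hxz, hyz⟩)
    simp [Finset.insert_subset_iff]
  · intro b hb
    obtain ⟨l, hl, rfl⟩ := mem_toF.1 hb
    obtain ⟨i, hi⟩ := flatB_flatC l hl
    refine ⟨i, mem_toF.2 ⟨l, hi, rfl⟩, fun i' h' => ?_⟩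
    obtain ⟨l', hl', e⟩ := mem_toF.1 h'
    rw [inj_ok (flatC_flatB _ _ hl') hl e] at hl'
    exact (flatC_uniq i l hi i' hl').symm
  · intro T hT hc
    obtain ⟨x, y, hxy, rfl⟩ := Finset.card_eq_two.1 hc
    simp only [Finset.insert_subset_iff, Finset.singleton_subset_iff, Finset.mem_range] at hT
    refine uniq_of _ _ _ (fun l => ?_) (pair_ok i x hT.1 y hT.2 hxy)
    simp [Finset.insert_subset_iff]
  · have hB : ∀ j, ∀ l ∈ cell i j, l ∈ flatB := fun j l hl => flatC_flatB i l (cell_flatC i j l hl)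
    refine ⟨5, fun j => toF (cell i j), fun j => ⟨fun b hb => (blk_ok (hB j) b hb).1, ?_⟩,
      fun j => toF_mono (cell_flatC i j), ?_⟩
    · intro y hy
      refine uniq_of _ _ _ (fun l => ?_) (par_ok i j y (Finset.mem_range.1 hy))
      simp
    · intro b hb
      obtain ⟨l, hl, rfl⟩ := mem_toF.1 hb
      obtain ⟨j, hj⟩ := flatC_cell i l hl
      refine ⟨j, mem_toF.2 ⟨l, hj, rfl⟩, fun j' h' => ?_⟩
      obtain ⟨l', hl', e⟩ := mem_toF.1 h'
      rw [inj_ok (hB _ _ hl') (flatC_flatB i l hl) e] at hl'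
      exact (cell_uniq i j l hj j' hl').symm
end
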